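/- Let (W_i)_{i ≥ 0} be Jordan domains in ℂ such that diam(W_i) → 0 as i → ∞, W_0 ∩ W_i ≠ ∅ for every i ≥ 1, and cl(W_i) ∩ cl(W_j) = ∅ whenever i > j ≥ 1. Let K be the closure of ⋃_{i ≥ 0} W_i and let W be the union of K with all bounded connected components of ℂ \ K (the set obtained from K by filling in the holes). Then W is a Jordan disk: the topological frontier of W is a Jordan curve. -/

import Mathlib

open Set Metric Bornology

/-- A Jordan curve: a subset of `ℂ` homeomorphic to the unit circle. -/
def IsJordanCurve (C : Set ℂ) : Prop :=
  Nonempty (↥(Metric.sphere (0 : ℂ) 1) ≃ₜ ↥C)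

/-- A Jordan domain: a nonempty bounded connected open subset of `ℂ` whose frontier is
a Jordan curve. -/
def IsJordanDomain (W : Set ℂ) : Prop :=
  IsOpen W ∧ IsConnected W ∧ IsBounded W ∧ IsJordanCurve (frontier W)

/-- The set obtained from `K` by filling in the holes: the union of `K` with all bounded
connected components of `ℂ \ K`. -/
def fillHoles (K : Set ℂ) : Set ℂ :=
  K ∪ {z : ℂ | z ∉ K ∧ IsBounded (connectedComponentIn Kᶜ z)}

/-!
The union `K` is compact and uniformly locally connected: only finitely many of the domains have
diameter above a given threshold, each of them is locally connected up to its boundary, and a small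
domain is tied to the rest of `K` through the point at which it meets `W 0`. No boundary point `x`
of the filled set lies in any `W i`, so `K \ {x}` stays between the connected set `⋃ i, W i` and its
closure: `K` has no cut point there.

These two facts force the frontier of the filled set to be a Jordan curve. Uniformise its complement
in the sphere by the unit disc. By the length–area method every boundary point of the disc is
surrounded by arbitrarily small circular arcs whose images are short; as `K` is locally connected,
such an image together with a small connected piece of `K` separates a small region from infinity,
and so the map extends continuously to the closed disc. If two boundary points had the same image
`x`, the image of the chord between them would separate the plane into two pieces both meeting `K`,
so that `x` would be a cut point. The extension is therefore injective on the circle, which it maps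
onto the frontier.

The planar topology rests on continuous logarithms: `p` and `q` lie in the same component of the
complement of a compact set if and only if `(z - p) / (z - q)` has a continuous logarithm on it.
-/

open Filter Topology
open scoped ComplexConjugate Pointwise Real

theorem isPreconnected_compl_closedBall {E : Type*} [NormedAddCommGroup E] [NormedSpace ℝ E]
    (h : 1 < Module.rank ℝ E) (a : E) (r : ℝ) : IsPreconnected (closedBall a r)ᶜ := by
  rcases lt_or_ge r 0 with hr | hr
  · simpa [closedBall_eq_empty.2 hr] using isPreconnected_univ
  have hpolar : (closedBall a r)ᶜ = (fun p : ℝ × E ↦ a + p.1 • p.2) '' (Ioi r ×ˢ sphere 0 1) := by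
    ext x
    simp only [mem_compl_iff, mem_closedBall, dist_eq_norm, not_le, mem_image, mem_prod, mem_Ioi,
      mem_sphere_zero_iff_norm, Prod.exists]
    constructor
    · intro hx
      have hpos : ‖x - a‖ ≠ 0 := (hr.trans_lt hx).ne'
      exact ⟨‖x - a‖, ‖x - a‖⁻¹ • (x - a), ⟨hx, by simp [norm_smul, hpos]⟩, by
        simp [smul_smul, hpos]⟩
    · rintro ⟨t, u, ⟨ht, hu⟩, rfl⟩
      simpa [norm_smul, hu] using ht.trans_le (le_abs_self t)
  rw [hpolar]
  exact (isPreconnected_Ioi.prod (isPreconnected_sphere h 0 1)).image _ (by fun_prop)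

theorem not_isBounded_compl_of_isBounded {X : Type*} [PseudoMetricSpace X] [NoncompactSpace X]
    [ProperSpace X] {s : Set X} (hs : IsBounded s) : ¬IsBounded sᶜ := fun hsc ↦
  noncompact_univ X <| isCompact_of_isClosed_isBounded isClosed_univ <| by
    simpa using hs.union hsc

theorem frontier_connectedComponentIn_compl_subset {X : Type*} [TopologicalSpace X]
    [LocallyConnectedSpace X] {s : Set X} (hs : IsClosed s) (x : X) :
    frontier (connectedComponentIn sᶜ x) ⊆ s := by
  intro y hy
  by_contra hys
  have hopen (z : X) : IsOpen (connectedComponentIn sᶜ z) := hs.isOpen_compl.connectedComponentIn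
  obtain ⟨hycl, hynot⟩ := (hopen x).frontier_eq ▸ hy
  obtain ⟨w, hwy, hwx⟩ := mem_closure_iff.1 hycl _ (hopen y) (mem_connectedComponentIn hys)
  rw [connectedComponentIn_eq hwx, ← connectedComponentIn_eq hwy] at hynot
  exact hynot (mem_connectedComponentIn hys)

namespace fillHoles

variable {K V : Set ℂ} {a q : ℂ} {R : ℝ}

theorem mem_compl_iff {z : ℂ} :
    z ∈ (fillHoles K)ᶜ ↔ z ∉ K ∧ ¬IsBounded (connectedComponentIn Kᶜ z) := by
  simp only [fillHoles, Set.mem_compl_iff, mem_union, mem_ofPred_eq]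
  tauto

theorem subset_self : K ⊆ fillHoles K := subset_union_left

theorem compl_eq_connectedComponentIn (hK : K ⊆ closedBall a R) (hq : q ∉ closedBall a R) :
    (fillHoles K)ᶜ = connectedComponentIn Kᶜ q := by
  have hsub : (closedBall a R)ᶜ ⊆ connectedComponentIn Kᶜ q :=
    (isPreconnected_compl_closedBall (by simp) a R).subset_connectedComponentIn hq
      (compl_subset_compl.2 hK)
  have hunb : ¬IsBounded (connectedComponentIn Kᶜ q) := fun h ↦
    not_isBounded_compl_of_isBounded isBounded_closedBall (h.subset hsub)
  ext z
  rw [mem_compl_iff]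
  constructor
  · rintro ⟨hz, hzunb⟩
    have hout : ¬connectedComponentIn Kᶜ z ⊆ closedBall a R :=
      fun h ↦ hzunb (isBounded_closedBall.subset h)
    obtain ⟨w, hwz, hw⟩ := not_subset.1 hout
    rw [connectedComponentIn_eq (hsub hw), ← connectedComponentIn_eq hwz]
    exact mem_connectedComponentIn hz
  · exact fun hz ↦ ⟨connectedComponentIn_subset _ _ hz, connectedComponentIn_eq hz ▸ hunb⟩

theorem exists_compl_eq_connectedComponentIn (hK : IsBounded K) :
    ∃ q, (fillHoles K)ᶜ = connectedComponentIn Kᶜ q := by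
  obtain ⟨R, hR⟩ := hK.subset_closedBall 0
  obtain ⟨q, hq⟩ := NormedSpace.exists_lt_norm ℝ ℂ R
  exact ⟨q, compl_eq_connectedComponentIn hR (by simpa using hq)⟩

theorem subset_closedBall (hK : K ⊆ closedBall a R) : fillHoles K ⊆ closedBall a R := by
  intro z hz
  by_contra hzR
  have hzc : z ∈ (fillHoles K)ᶜ := by
    rw [compl_eq_connectedComponentIn hK hzR]
    exact mem_connectedComponentIn fun h ↦ hzR (hK h)
  exact hzc hz

theorem isCompact (hK : IsCompact K) : IsCompact (fillHoles K) := by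
  obtain ⟨R, hR⟩ := hK.isBounded.subset_closedBall 0
  obtain ⟨q, hq⟩ := exists_compl_eq_connectedComponentIn hK.isBounded
  refine isCompact_of_isClosed_isBounded ?_ (isBounded_closedBall.subset (subset_closedBall hR))
  rw [← isOpen_compl_iff, hq]
  exact hK.isClosed.isOpen_compl.connectedComponentIn

theorem isPreconnected_compl (hK : IsBounded K) : IsPreconnected (fillHoles K)ᶜ := by
  obtain ⟨q, hq⟩ := exists_compl_eq_connectedComponentIn hK
  exact hq ▸ isPreconnected_connectedComponentIn

theorem frontier_subset (hK : IsCompact K) : frontier (fillHoles K) ⊆ K := by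
  obtain ⟨q, hq⟩ := exists_compl_eq_connectedComponentIn hK.isBounded
  rw [← frontier_compl, hq]
  exact frontier_connectedComponentIn_compl_subset hK.isClosed q

theorem subset_of_isPreconnected_compl (hKV : K ⊆ V) (hV : IsBounded V)
    (hVc : IsPreconnected Vᶜ) : fillHoles K ⊆ V := by
  intro z hz
  by_contra hzV
  have hcomp : Vᶜ ⊆ connectedComponentIn Kᶜ z :=
    hVc.subset_connectedComponentIn hzV (compl_subset_compl.2 hKV)
  exact not_isBounded_compl_of_isBounded hV
    ((hz.resolve_left fun h ↦ hzV (hKV h)).2.subset hcomp)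

theorem isPreconnected (hK : IsCompact K) (hKc : IsPreconnected K) :
    IsPreconnected (fillHoles K) := by
  rcases (fillHoles K).eq_empty_or_nonempty with hemp | ⟨x, hx⟩
  · simpa [hemp] using isPreconnected_empty
  have hmeet : ∀ z ∈ fillHoles K, ∃ C ⊆ fillHoles K, z ∈ C ∧ (C ∩ K).Nonempty ∧
      IsPreconnected C := by
    rintro z (hz | ⟨hz, hzb⟩)
    · exact ⟨K, subset_self, hz, ⟨z, hz, hz⟩, hKc⟩
    set C := connectedComponentIn Kᶜ z
    have hfr := frontier_connectedComponentIn_compl_subset hK.isClosed z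
    have hzC : z ∈ C := mem_connectedComponentIn hz
    have hCfill : C ⊆ fillHoles K := fun w hw ↦ Or.inr
      ⟨connectedComponentIn_subset _ _ hw, connectedComponentIn_eq hw ▸ hzb⟩
    obtain ⟨w, hw⟩ : (frontier C).Nonempty := nonempty_frontier_iff.2
      ⟨⟨z, hzC⟩, fun h ↦ not_isBounded_compl_of_isBounded isBounded_empty
        (by simpa [h] using hzb)⟩
    refine ⟨closure C, ?_, subset_closure hzC, ⟨w, frontier_subset_closure hw, hfr hw⟩,
      isPreconnected_connectedComponentIn.closure⟩
    rw [closure_eq_self_union_frontier]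
    exact union_subset hCfill (hfr.trans subset_self)
  obtain ⟨C₀, -, -, ⟨x₀, -, hx₀⟩, -⟩ := hmeet x hx
  refine isPreconnected_of_forall x₀ fun z hz ↦ ?_
  obtain ⟨C, hCfill, hzC, ⟨w, hwC, hwK⟩, hC⟩ := hmeet z hz
  exact ⟨C ∪ K, union_subset hCfill subset_self, Or.inr hx₀, Or.inl hzC,
    hC.union w hwC hwK hKc⟩

end fillHoles

/-- The function `f` has a continuous branch of logarithm on the set `s`. This is the form in which
the fundamental group enters the planar topology below. -/
def HasLogOn {X : Type*} [TopologicalSpace X] (f : X → ℂ) (s : Set X) : Prop :=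
  ∃ g : X → ℂ, ContinuousOn g s ∧ ∀ z ∈ s, Complex.exp (g z) = f z

theorem exists_int_eq_add_of_exp_eq {X : Type*} [TopologicalSpace X] {s : Set X}
    (hs : IsPreconnected s) {g h : X → ℂ} (hg : ContinuousOn g s) (hh : ContinuousOn h s)
    (he : ∀ z ∈ s, Complex.exp (g z) = Complex.exp (h z)) :
    ∃ k : ℤ, ∀ z ∈ s, g z = h z + k * (2 * π * Complex.I) := by
  rcases s.eq_empty_or_nonempty with rfl | ⟨z₀, hz₀⟩
  · exact ⟨0, by simp⟩
  have hdisc : IsDiscrete (AddSubgroup.zmultiples (2 * π * Complex.I) : Set ℂ) :=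
    ⟨NormedSpace.discreteTopology_zmultiples _⟩
  have hmaps : MapsTo (fun z ↦ g z - h z) s (AddSubgroup.zmultiples (2 * π * Complex.I)) := by
    intro z hz
    obtain ⟨k, hk⟩ := Complex.exp_eq_exp_iff_exists_int.1 (he z hz)
    exact ⟨k, by simp [hk]⟩
  obtain ⟨k, hk⟩ := hmaps hz₀
  refine ⟨k, fun z hz ↦ ?_⟩
  have hconst : g z - h z = g z₀ - h z₀ :=
    hs.constant_of_mapsTo hdisc (hg.sub hh) hmaps hz hz₀
  linear_combination hconst - (by simpa using hk : k * (2 * π * Complex.I) = g z₀ - h z₀)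

namespace HasLogOn

variable {X Y : Type*} [TopologicalSpace X] [TopologicalSpace Y] {f f₁ f₂ : X → ℂ} {s t : Set X}

theorem ne_zero (h : HasLogOn f s) {z : X} (hz : z ∈ s) : f z ≠ 0 := by
  obtain ⟨g, -, hgf⟩ := h
  exact hgf z hz ▸ Complex.exp_ne_zero _

theorem mono (h : HasLogOn f s) (hts : t ⊆ s) : HasLogOn f t := by
  obtain ⟨g, hg, hgf⟩ := h
  exact ⟨g, hg.mono hts, fun z hz ↦ hgf z (hts hz)⟩

theorem congr (h : HasLogOn f₁ s) (hf : EqOn f₁ f₂ s) : HasLogOn f₂ s := by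
  obtain ⟨g, hg, hgf⟩ := h
  exact ⟨g, hg, fun z hz ↦ (hgf z hz).trans (hf hz)⟩

theorem mul (h₁ : HasLogOn f₁ s) (h₂ : HasLogOn f₂ s) : HasLogOn (fun z ↦ f₁ z * f₂ z) s := by
  obtain ⟨g₁, hg₁, hgf₁⟩ := h₁
  obtain ⟨g₂, hg₂, hgf₂⟩ := h₂
  exact ⟨fun z ↦ g₁ z + g₂ z, hg₁.add hg₂, fun z hz ↦ by
    rw [Complex.exp_add, hgf₁ z hz, hgf₂ z hz]⟩

theorem inv (h : HasLogOn f s) : HasLogOn (fun z ↦ (f z)⁻¹) s := by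
  obtain ⟨g, hg, hgf⟩ := h
  exact ⟨fun z ↦ -g z, hg.neg, fun z hz ↦ by rw [Complex.exp_neg, hgf z hz]⟩

theorem comp {u : Y → X} {t : Set Y} (h : HasLogOn f s) (hu : ContinuousOn u t)
    (hmaps : MapsTo u t s) : HasLogOn (fun y ↦ f (u y)) t := by
  obtain ⟨g, hg, hgf⟩ := h
  exact ⟨fun y ↦ g (u y), hg.comp hu hmaps, fun y hy ↦ hgf _ (hmaps hy)⟩

theorem const {c : ℂ} (hc : c ≠ 0) : HasLogOn (fun _ ↦ c) s :=
  ⟨fun _ ↦ Complex.log c, continuousOn_const, fun _ _ ↦ Complex.exp_log hc⟩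

theorem of_norm_sub_one_lt_one (hf : ContinuousOn f s) (h : ∀ z ∈ s, ‖f z - 1‖ < 1) :
    HasLogOn f s := by
  have hslit : ∀ z ∈ s, f z ∈ Complex.slitPlane := fun z hz ↦ by
    simpa using Complex.mem_slitPlane_of_norm_lt_one (h z hz)
  exact ⟨fun z ↦ Complex.log (f z), hf.clog hslit, fun z hz ↦
    Complex.exp_log (Complex.slitPlane_ne_zero (hslit z hz))⟩

theorem univ_of_contractibleSpace [ContractibleSpace X] [LocallyPathConnectedSpace X]
    (hf : Continuous f) (h0 : ∀ z, f z ≠ 0) : HasLogOn f univ := by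
  have : ContractibleSpace (univ : Set X) := (Homeomorph.Set.univ X).contractibleSpace
  have hsc : IsSimplyConnected (univ : Set X) := (inferInstance : SimplyConnectedSpace univ)
  obtain ⟨g, hg, hgf⟩ := Complex.exists_continuousOn_eqOn_exp_comp hsc isOpen_univ
    hf.continuousOn (by rintro ⟨z, -, hz⟩; exact h0 z hz)
  exact ⟨g, hg, hgf⟩

theorem union (hs : IsClosed s) (ht : IsClosed t) (hst : IsPreconnected (s ∩ t))
    (hfs : HasLogOn f s) (hft : HasLogOn f t) : HasLogOn f (s ∪ t) := by
  classical
  obtain ⟨g, hg, hgf⟩ := hfs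
  obtain ⟨h, hh, hhf⟩ := hft
  obtain ⟨k, hk⟩ := exists_int_eq_add_of_exp_eq hst (hg.mono inter_subset_left)
    (hh.mono inter_subset_right) fun z hz ↦ (hgf z hz.1).trans (hhf z hz.2).symm
  let l : X → ℂ := s.piecewise g fun z ↦ h z + k * (2 * π * Complex.I)
  have hls : EqOn l g s := s.piecewise_eqOn _ _
  have hlt : EqOn l (fun z ↦ h z + k * (2 * π * Complex.I)) t := fun z hz ↦ by
    by_cases hzs : z ∈ s
    · rw [hls hzs, hk z ⟨hzs, hz⟩]
    · exact piecewise_eq_of_notMem _ _ _ hzs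
  refine ⟨l, (hg.congr hls).union_of_isClosed ((hh.add continuousOn_const).congr hlt) hs ht, ?_⟩
  rintro z (hz | hz)
  · rw [hls hz, hgf z hz]
  · rw [hlt hz, Complex.exp_add, Complex.exp_int_mul_two_pi_mul_I, mul_one, hhf z hz]

theorem univ_of_forall_isCompact [PathConnectedSpace X] [LocallyPathConnectedSpace X]
    (hf : Continuous f) (h : ∀ t, IsCompact t → HasLogOn f t) : HasLogOn f univ := by
  obtain ⟨x₀⟩ : Nonempty X := inferInstance
  have hx₀ : f x₀ ≠ 0 := (h {x₀} isCompact_singleton).ne_zero rfl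
  have hlocal : IsLocalHomeomorph Complex.exp :=
    (isClosed_singleton.isOpen_compl.isOpenEmbedding_subtypeVal (X := ℂ)).isLocalHomeomorph.comp
      Complex.isCoveringMap_exp.isLocalHomeomorph
  suffices hlift : ∃ F : C(X, ℂ), F x₀ = Complex.log (f x₀) ∧ Complex.exp ∘ F = f by
    obtain ⟨F, -, hF⟩ := hlift
    exact ⟨F, F.continuous.continuousOn, fun z _ ↦ congrFun hF z⟩
  refine (hlocal.existsUnique_continuousMap_lifts ⟨f, hf⟩ x₀ (Complex.log (f x₀))
    (Complex.exp_log hx₀) ?exists_lift ?lift_unique).exists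
  case exists_lift =>
    rintro γ rfl
    obtain ⟨l, hl, hlf⟩ := h (range γ) (isCompact_range γ.continuous)
    have hlγ : Continuous fun t ↦ l (γ t) := hl.comp_continuous γ.continuous mem_range_self
    refine ⟨⟨fun t ↦ l (γ t) - l (γ 0) + Complex.log (f (γ 0)),
      (hlγ.sub continuous_const).add continuous_const⟩, by simp, ?_⟩
    ext t
    simp [Complex.exp_add, Complex.exp_sub, hlf _ (mem_range_self _), Complex.exp_log hx₀, hx₀]
  case lift_unique =>
    intro γ γ' Γ Γ' hγ hγ' hΓ hΓ' hlift hlift' hend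
    obtain ⟨l, hl, hlf⟩ := h (range γ ∪ range γ')
      ((isCompact_range γ.continuous).union (isCompact_range γ'.continuous))
    have hincr : ∀ (δ : C(unitInterval, X)) (Δ : C(unitInterval, ℂ)),
        range δ ⊆ range γ ∪ range γ' → Complex.exp ∘ Δ = f ∘ δ →
        Δ 1 - Δ 0 = l (δ 1) - l (δ 0) := by
      intro δ Δ hδ hΔ
      obtain ⟨k, hk⟩ := exists_int_eq_add_of_exp_eq isPreconnected_univ Δ.continuous.continuousOn
        (hl.comp_continuous δ.continuous fun t ↦ hδ (mem_range_self t)).continuousOn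
        fun t _ ↦ (congrFun hΔ t).trans (hlf _ (hδ (mem_range_self t))).symm
      simp [hk 1 trivial, hk 0 trivial]
    have h1 := hincr γ Γ subset_union_left hlift
    have h2 := hincr γ' Γ' subset_union_right hlift'
    rw [hγ, hΓ, hend] at h1
    rw [hγ', hΓ', ← h1] at h2
    exact (sub_left_inj.1 h2).symm

theorem of_forall_isCompact [LocallyPathConnectedSpace X] (hs : IsOpen s) (hsc : IsPathConnected s)
    (hf : ContinuousOn f s) (h : ∀ t ⊆ s, IsCompact t → HasLogOn f t) : HasLogOn f s := by
  have := isPathConnected_iff_pathConnectedSpace.1 hsc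
  have := hs.locallyPathConnectedSpace
  obtain ⟨g, hg, hgf⟩ := univ_of_forall_isCompact (f := fun z : s ↦ f z)
    (continuousOn_iff_continuous_domRestrict.1 hf) fun t ht ↦
      (h _ (by simp) (ht.image continuous_subtype_val)).comp continuous_subtype_val.continuousOn
        (mapsTo_image _ _)
  refine ⟨Function.extend (↑) g 0, ?_, fun z hz ↦ ?_⟩
  · rw [continuousOn_iff_continuous_domRestrict, ← continuousOn_univ]
    exact hg.congr fun z _ ↦ Subtype.val_injective.extend_apply _ _ _
  · exact (congrArg _ (Subtype.val_injective.extend_apply g 0 ⟨z, hz⟩)).trans (hgf ⟨z, hz⟩ trivial)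

end HasLogOn

theorem sub_ne_zero_of_mem_of_notMem {G : Type*} [AddGroup G] {s : Set G} {x p : G}
    (hx : x ∈ s) (hp : p ∉ s) : x - p ≠ 0 :=
  sub_ne_zero.2 (ne_of_mem_of_not_mem hx hp)

namespace HasLogOn

variable {A B C X : Set ℂ} {p q : ℂ} {R : ℝ}

theorem sub_div_sub (hA : IsClosed A) (hC : IsPreconnected C) (hAC : Disjoint A C) (hp : p ∈ C)
    (hq : q ∈ C) : HasLogOn (fun z ↦ (z - p) / (z - q)) A := by
  have hne : ∀ x ∈ C, ∀ z ∈ A, z - x ≠ 0 := fun x hx z hz ↦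
    sub_ne_zero_of_mem_of_notMem hz (hAC.notMem_of_mem_right hx)
  refine hC.induction₂ (fun x y ↦ HasLogOn (fun z ↦ (z - x) / (z - y)) A) (fun x hx ↦ ?_)
    (fun x y w _ hy _ hxy hyw ↦ ?_) (fun x y _ _ hxy ↦ ?_) hp hq
  · obtain ⟨r, hr, hrA⟩ := Metric.isOpen_iff.1 hA.isOpen_compl x (hAC.notMem_of_mem_right hx)
    filter_upwards [inter_mem_nhdsWithin C (ball_mem_nhds x hr)] with y hy
    suffices HasLogOn (fun z ↦ (z - y) / (z - x)) A from
      this.inv.congr fun z _ ↦ inv_div _ _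
    refine of_norm_sub_one_lt_one (by fun_prop (disch := exact hne x hx)) fun z hz ↦ ?_
    have hzr : r ≤ ‖z - x‖ := by
      simpa [dist_eq_norm] using fun h : z ∈ ball x r ↦ hrA h hz
    rw [div_sub_one (hne x hx z hz), sub_sub_sub_cancel_left, norm_div,
      div_lt_one (hr.trans_le hzr), ← dist_eq_norm, dist_comm]
    exact hy.2.trans_le hzr
  · exact (hxy.mul hyw).congr fun z hz ↦ div_mul_div_cancel₀ (hne y hy z hz)
  · exact hxy.inv.congr fun z _ ↦ inv_div _ _

theorem sub_of_norm_lt (hX : X ⊆ closedBall 0 R) (hq : R < ‖q‖) :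
    HasLogOn (fun z ↦ z - q) X := by
  rcases X.eq_empty_or_nonempty with rfl | ⟨x, hx⟩
  · exact ⟨0, continuousOn_empty _, by simp⟩
  have hq0 : q ≠ 0 := norm_pos_iff.1 ((dist_nonneg.trans (hX hx)).trans_lt hq)
  have hlog : HasLogOn (fun z ↦ 1 - z / q) X := by
    refine of_norm_sub_one_lt_one (by fun_prop) fun z hz ↦ ?_
    have hzR : ‖z‖ ≤ R := by simpa using hX hz
    rw [sub_sub_cancel_left, norm_neg, norm_div, div_lt_one (norm_pos_iff.2 hq0)]
    exact hzR.trans_lt hq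
  exact ((const (neg_ne_zero.2 hq0)).mul hlog).congr fun z _ ↦ by field

theorem not_sub_sphere (p : ℂ) (hR : 0 < R) : ¬HasLogOn (fun z ↦ z - p) (sphere p R) := by
  rintro ⟨g, hg, hgp⟩
  have hmem := circleMap_mem_sphere p hR.le
  obtain ⟨k, hk⟩ := exists_int_eq_add_of_exp_eq isPreconnected_univ
    (g := fun θ : ℝ ↦ g (circleMap p R θ)) (h := fun θ : ℝ ↦ Real.log R + θ * Complex.I)
    (hg.comp_continuous (continuous_circleMap p R) hmem).continuousOn (by fun_prop) fun θ _ ↦ by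
      rw [hgp _ (hmem θ), Complex.exp_add, ← Complex.ofReal_exp, Real.exp_log hR]
      simp [circleMap]
  have hperiod : circleMap p R (2 * π) = circleMap p R 0 := by
    simpa using periodic_circleMap p R 0
  have hzero : (2 * π * Complex.I : ℂ) = 0 := by
    have h2π := hk (2 * π) trivial
    rw [hperiod, hk 0 trivial] at h2π
    push_cast at h2π
    linear_combination -h2π
  exact Complex.two_pi_I_ne_zero hzero

theorem mem_connectedComponentIn_of_isBounded (hX : IsClosed X) (hp : p ∉ X) (hq : q ∉ X)
    (hb : IsBounded (connectedComponentIn Xᶜ p))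
    (hlog : HasLogOn (fun z ↦ (z - p) / (z - q)) X) : q ∈ connectedComponentIn Xᶜ p := by
  classical
  by_contra hqP
  set P := connectedComponentIn Xᶜ p
  have hfr : frontier P ⊆ X := frontier_connectedComponentIn_compl_subset hX p
  obtain ⟨g, hg, hgpq⟩ := hlog
  obtain ⟨G, hG⟩ := ContinuousMap.exists_restrict_eq hX
    ⟨X.domRestrict g, continuousOn_iff_continuous_domRestrict.1 hg⟩
  have hGX : ∀ z ∈ X, G z = g z := fun z hz ↦ congr($hG ⟨z, hz⟩)
  -- On a large circle `F` is `z - p`, but unlike `z - p` it has no zero.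
  let F : ℂ → ℂ := P.piecewise (fun z ↦ Complex.exp (G z) * (z - q)) (fun z ↦ z - p)
  have hF : Continuous F := by
    refine Continuous.piecewise (fun z hz ↦ ?_) (by fun_prop) (by fun_prop)
    rw [hGX z (hfr hz), hgpq z (hfr hz),
      div_mul_cancel₀ _ (sub_ne_zero_of_mem_of_notMem (hfr hz) hq)]
  have hF0 : ∀ z, F z ≠ 0 := fun z ↦ by
    by_cases hz : z ∈ P
    · simp only [F, piecewise_eq_of_mem _ _ _ hz]
      exact mul_ne_zero (Complex.exp_ne_zero _) (sub_ne_zero_of_mem_of_notMem hz hqP)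
    · simp only [F, piecewise_eq_of_notMem _ _ _ hz]
      exact sub_ne_zero.2 fun h ↦ hz (h ▸ mem_connectedComponentIn hp)
  obtain ⟨R, hR, hPR⟩ := hb.subset_ball_lt 0 p
  have hFsphere : EqOn F (fun z ↦ z - p) (sphere p R) := fun z hz ↦
    piecewise_eq_of_notMem _ _ _ fun hzP ↦ (mem_ball.1 (hPR hzP)).ne hz
  exact not_sub_sphere p hR
    (((univ_of_contractibleSpace hF hF0).mono (subset_univ _)).congr hFsphere)

end HasLogOn

theorem connectedComponentIn_compl_eq_of_not_isBounded {X : Set ℂ} {p q : ℂ} (hX : IsBounded X)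
    (hp : ¬IsBounded (connectedComponentIn Xᶜ p)) (hq : ¬IsBounded (connectedComponentIn Xᶜ q)) :
    connectedComponentIn Xᶜ p = connectedComponentIn Xᶜ q := by
  obtain ⟨x, hx⟩ := fillHoles.exists_compl_eq_connectedComponentIn hX
  have heq : ∀ y, ¬IsBounded (connectedComponentIn Xᶜ y) →
      connectedComponentIn Xᶜ y = connectedComponentIn Xᶜ x := fun y hy ↦ by
    have hyX : y ∉ X := fun h ↦ hy (by simp [connectedComponentIn_eq_empty (notMem_compl_iff.2 h)])
    exact (connectedComponentIn_eq (hx ▸ fillHoles.mem_compl_iff.2 ⟨hyX, hy⟩)).symm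
  rw [heq p hp, heq q hq]

/-- Borsuk's separation criterion. -/
theorem mem_connectedComponentIn_of_hasLogOn {X : Set ℂ} {p q : ℂ} (hX : IsCompact X) (hp : p ∉ X)
    (hq : q ∉ X) (hlog : HasLogOn (fun z ↦ (z - p) / (z - q)) X) :
    q ∈ connectedComponentIn Xᶜ p := by
  by_cases hbp : IsBounded (connectedComponentIn Xᶜ p)
  · exact hlog.mem_connectedComponentIn_of_isBounded hX.isClosed hp hq hbp
  suffices connectedComponentIn Xᶜ p = connectedComponentIn Xᶜ q from
    this ▸ mem_connectedComponentIn hq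
  by_cases hbq : IsBounded (connectedComponentIn Xᶜ q)
  · exact (connectedComponentIn_eq (HasLogOn.mem_connectedComponentIn_of_isBounded hX.isClosed hq hp
      hbq (hlog.inv.congr fun z _ ↦ inv_div _ _))).symm
  · exact connectedComponentIn_compl_eq_of_not_isBounded hX.isBounded hbp hbq

/-- Janiszewski's theorem. -/
theorem mem_connectedComponentIn_compl_union {A B : Set ℂ} {p q : ℂ} (hA : IsCompact A)
    (hB : IsCompact B) (hAB : IsPreconnected (A ∩ B)) (hpA : p ∉ A) (hpB : p ∉ B)
    (hqA : q ∈ connectedComponentIn Aᶜ p) (hqB : q ∈ connectedComponentIn Bᶜ p) :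
    q ∈ connectedComponentIn (A ∪ B)ᶜ p := by
  have hlog : ∀ D : Set ℂ, IsCompact D → p ∉ D → q ∈ connectedComponentIn Dᶜ p →
      HasLogOn (fun z ↦ (z - p) / (z - q)) D := fun D hD hpD hqD ↦
    .sub_div_sub hD.isClosed isPreconnected_connectedComponentIn
      (disjoint_compl_right.mono_right (connectedComponentIn_subset _ _))
      (mem_connectedComponentIn hpD) hqD
  exact mem_connectedComponentIn_of_hasLogOn (hA.union hB) (by simp [hpA, hpB])
    (by simp [show q ∉ A from connectedComponentIn_subset _ _ hqA,
      show q ∉ B from connectedComponentIn_subset _ _ hqB])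
    (.union hA.isClosed hB.isClosed hAB (hlog A hA hpA hqA) (hlog B hB hpB hqB))

theorem isPreconnected_sdiff_of_isPreconnected_compl {V Y : Set ℂ} (hV : IsOpen V)
    (hVb : IsBounded V) (hVc : IsPreconnected V) (hY : IsCompact Y) (hYV : Y ⊆ V)
    (hYc : IsPreconnected Yᶜ) : IsPreconnected (V \ Y) := by
  obtain ⟨R, hR⟩ := hVb.subset_ball 0
  set A : Set ℂ := Vᶜ ∩ closedBall 0 R
  have hA : IsCompact A := (isCompact_closedBall 0 R).inter_left hV.isClosed_compl
  have hVA : V ⊆ Aᶜ := fun z hz h ↦ h.1 hz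
  have hAY : A ∩ Y = ∅ := eq_empty_of_forall_notMem fun z hz ↦ hVA (hYV hz.2) hz.1
  refine isPreconnected_of_forall_pair fun p hp q hq ↦ ?_
  have hpAY : p ∈ (A ∪ Y)ᶜ := fun h ↦ h.elim (hVA hp.1) hp.2
  refine ⟨connectedComponentIn (A ∪ Y)ᶜ p, ?_, mem_connectedComponentIn hpAY, ?_,
    isPreconnected_connectedComponentIn⟩
  · have hcover : connectedComponentIn (A ∪ Y)ᶜ p ⊆ V ∪ (closedBall 0 R)ᶜ := by
      refine (connectedComponentIn_subset _ _).trans fun z hz ↦ ?_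
      exact or_iff_not_imp_left.2 fun hzV hzR ↦ hz (Or.inl ⟨hzV, hzR⟩)
    have hdisj : Disjoint V (closedBall 0 R)ᶜ :=
      disjoint_compl_right.mono_left (hR.trans ball_subset_closedBall)
    have hV' := isPreconnected_connectedComponentIn.subset_left_of_subset_union hV
      isClosed_closedBall.isOpen_compl hdisj hcover
      ⟨p, mem_connectedComponentIn hpAY, hp.1⟩
    exact fun z hz ↦ ⟨hV' hz, fun hzY ↦ connectedComponentIn_subset _ _ hz (Or.inr hzY)⟩
  · exact mem_connectedComponentIn_compl_union hA hY (hAY ▸ isPreconnected_empty) (hVA hp.1) hp.2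
      (hVc.subset_connectedComponentIn hp.1 hVA hq.1)
      (hYc.subset_connectedComponentIn hp.2 subset_rfl hq.2)

theorem not_isBounded_connectedComponentIn_compl_image {V Y : Set ℂ} {ψ : ℂ → ℂ} {c : ℂ}
    (hψV : IsOpen (ψ '' V)) (hψ : ContinuousOn ψ V) (hinj : InjOn ψ V) (hY : IsCompact Y)
    (hYV : Y ⊆ V) (hVY : IsPreconnected (V \ Y)) (hc : c ∉ ψ '' V) :
    ¬IsBounded (connectedComponentIn (ψ '' Y)ᶜ c) := by
  intro hb
  set B := connectedComponentIn (ψ '' Y)ᶜ c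
  have hψY : IsCompact (ψ '' Y) := hY.image_of_continuousOn (hψ.mono hYV)
  have hcB : c ∈ B := mem_connectedComponentIn fun h ↦ hc (Set.image_mono hYV h)
  have hBo : IsOpen B := hψY.isClosed.isOpen_compl.connectedComponentIn
  have hfr : frontier B ⊆ ψ '' Y := frontier_connectedComponentIn_compl_subset hψY.isClosed c
  have hnot : ∀ S : Set ℂ, IsOpen S → c ∈ S → ¬IsCompact S := fun S hSo hcS hS ↦ by
    have := IsClopen.eq_univ ⟨hS.isClosed, hSo⟩ ⟨c, hcS⟩
    exact noncompact_univ ℂ (this ▸ hS)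
  have hsplit : ψ '' V = ψ '' Y ∪ ψ '' (V \ Y) := by rw [← image_union, union_sdiff_cancel hYV]
  have hdisj : Disjoint (ψ '' Y) (ψ '' (V \ Y)) := disjoint_sdiff_right.image hinj hYV sdiff_subset
  by_cases hmeet : Disjoint (ψ '' (V \ Y)) B
  · have hVB : Disjoint (ψ '' V) B := by
      rw [hsplit, disjoint_union_left]
      exact ⟨disjoint_compl_right.mono_right (connectedComponentIn_subset _ _), hmeet⟩
    have hfrB : frontier B = ∅ := eq_empty_of_forall_notMem fun z hz ↦
      (hVB.closure_right hψV).notMem_of_mem_left (hsplit ▸ Or.inl (hfr hz))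
        (frontier_subset_closure hz)
    have hclB : closure B = B := by rw [closure_eq_self_union_frontier, hfrB, union_empty]
    exact hnot B hBo hcB (hclB ▸ hb.isCompact_closure)
  · have hsub : ψ '' (V \ Y) ⊆ B := by
      obtain ⟨y, hy, hyB⟩ := not_disjoint_iff.1 hmeet
      rw [show B = _ from connectedComponentIn_eq hyB]
      exact (hVY.image ψ (hψ.mono sdiff_subset)).subset_connectedComponentIn hy
        hdisj.subset_compl_left
    have heq : ψ '' V ∪ B = ψ '' Y ∪ closure B := by
      rw [closure_eq_self_union_frontier, hsplit, union_assoc, union_eq_self_of_subset_left hsub,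
        union_comm B, ← union_assoc, union_eq_self_of_subset_right hfr]
    exact hnot (ψ '' V ∪ B) (hψV.union hBo) (Or.inr hcB) (heq ▸ hψY.union hb.isCompact_closure)

namespace HasLogOn

variable {V : Set ℂ} {ψ : ℂ → ℂ} {c : ℂ}

theorem sub_of_injOn_of_isCompact (hV : IsOpen V) (hVb : IsBounded V) (hVp : IsPreconnected V)
    (hVc : IsPreconnected Vᶜ) (hψ : ContinuousOn ψ V) (hψV : IsOpen (ψ '' V)) (hinj : InjOn ψ V)
    (hc : c ∉ ψ '' V) {X : Set ℂ} (hX : IsCompact X) (hXV : X ⊆ V) :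
    HasLogOn (fun z ↦ ψ z - c) X := by
  set Y := fillHoles X
  have hY : IsCompact Y := fillHoles.isCompact hX
  have hYV : Y ⊆ V := fillHoles.subset_of_isPreconnected_compl hXV hVb hVc
  have hψY : IsCompact (ψ '' Y) := hY.image_of_continuousOn (hψ.mono hYV)
  have hunb := not_isBounded_connectedComponentIn_compl_image hψV hψ hinj hY hYV
    (isPreconnected_sdiff_of_isPreconnected_compl hV hVb hVp hY hYV
      (fillHoles.isPreconnected_compl hX.isBounded)) hc
  obtain ⟨M, hM⟩ := hψY.isBounded.subset_closedBall 0
  obtain ⟨q, hqB, hqM⟩ : ∃ q ∈ connectedComponentIn (ψ '' Y)ᶜ c, M < ‖q‖ := by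
    by_contra! h
    exact hunb (isBounded_closedBall.subset fun x hx ↦ mem_closedBall_zero_iff.2 (h x hx))
  have hlog : HasLogOn (fun w ↦ w - c) (ψ '' Y) := by
    refine ((sub_div_sub hψY.isClosed isPreconnected_connectedComponentIn
      (disjoint_compl_right.mono_right (connectedComponentIn_subset _ _))
      (mem_connectedComponentIn fun h ↦ hc (Set.image_mono hYV h)) hqB).mul
      (sub_of_norm_lt hM hqM)).congr fun w hw ↦ ?_
    exact div_mul_cancel₀ _
      (sub_ne_zero_of_mem_of_notMem hw (connectedComponentIn_subset _ _ hqB))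
  exact hlog.comp (hψ.mono hXV) fun x hx ↦ mem_image_of_mem ψ (fillHoles.subset_self hx)

theorem sub_of_injOn (hV : IsOpen V) (hVb : IsBounded V) (hVc : IsConnected V)
    (hVcc : IsPreconnected Vᶜ) (hψ : ContinuousOn ψ V) (hψV : IsOpen (ψ '' V)) (hinj : InjOn ψ V)
    (hc : c ∉ ψ '' V) : HasLogOn (fun z ↦ ψ z - c) V :=
  of_forall_isCompact hV (hV.isConnected_iff_isPathConnected.1 hVc) (hψ.sub continuousOn_const)
    fun _ hXV hX ↦ sub_of_injOn_of_isCompact hV hVb hVc.isPreconnected hVcc hψ hψV hinj hc hX hXV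

end HasLogOn

theorem isOpen_image_of_deriv_ne_zero {V O : Set ℂ} {f : ℂ → ℂ} (hV : IsOpen V)
    (hf : DifferentiableOn ℂ f V) (hf' : ∀ z ∈ V, deriv f z ≠ 0) (hOV : O ⊆ V) (hO : IsOpen O) :
    IsOpen (f '' O) := by
  rw [isOpen_iff_mem_nhds]
  rintro _ ⟨z, hz, rfl⟩
  have hstrict := (hf.analyticAt (hV.mem_nhds (hOV hz))).hasStrictDerivAt
  exact hstrict.map_nhds_eq (hf' z (hOV hz)) ▸ image_mem_map (hO.mem_nhds hz)

theorem le_norm_of_forall_sphere_le_norm {E : Type*} [NormedAddCommGroup E] [NormedSpace ℂ E]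
    [Nontrivial E] {G : E → ℂ} {a : E} {r m : ℝ} (hr : 0 < r) (hm : 0 < m)
    (hG : DifferentiableOn ℂ G (closedBall a r)) (hG0 : ∀ z ∈ closedBall a r, G z ≠ 0)
    (hGm : ∀ z ∈ sphere a r, m ≤ ‖G z‖) : m ≤ ‖G a‖ := by
  have hinv : DiffContOnCl ℂ (fun z ↦ (G z)⁻¹) (ball a r) := by
    refine DifferentiableOn.diffContOnCl ?_
    rw [closure_ball a hr.ne']
    exact hG.fun_inv hG0
  have hle : ‖(G a)⁻¹‖ ≤ m⁻¹ := by
    refine Complex.norm_le_of_forall_mem_frontier_norm_le isBounded_ball hinv (fun z hz ↦ ?_)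
      (subset_closure (mem_ball_self hr))
    rw [frontier_ball a hr.ne'] at hz
    rw [norm_inv]
    exact inv_anti₀ hm (hGm z hz)
  rw [norm_inv] at hle
  exact (inv_le_inv₀ (norm_pos_iff.2 (hG0 a (mem_closedBall_self hr.le))) hm).1 hle

/-- Hurwitz's theorem. -/
theorem eventually_eq_zero_of_tendstoLocallyUniformlyOn {ι : Type*} {l : Filter ι} [l.NeBot]
    {O : Set ℂ} {G : ι → ℂ → ℂ} {g : ℂ → ℂ} {a : ℂ} (hO : IsOpen O)
    (hG : ∀ n, DifferentiableOn ℂ (G n) O) (hG0 : ∀ n, ∀ z ∈ O, G n z ≠ 0)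
    (hlim : TendstoLocallyUniformlyOn G g l O) (ha : a ∈ O) (hga : g a = 0) :
    ∀ᶠ z in 𝓝 a, g z = 0 := by
  have hg : DifferentiableOn ℂ g O := hlim.differentiableOn (.of_forall hG) hO
  refine (hg.analyticAt (hO.mem_nhds ha)).eventually_eq_zero_or_eventually_ne_zero.resolve_right
    fun h ↦ ?_
  obtain ⟨r, hr, hball⟩ := Metric.nhds_basis_closedBall.mem_iff.1
    (inter_mem (eventually_nhdsWithin_iff.1 h) (hO.mem_nhds ha))
  have hrO : closedBall a r ⊆ O := fun z hz ↦ (hball hz).2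
  obtain ⟨w, hw, hmin⟩ := (isCompact_sphere a r).exists_isMinOn
    (NormedSpace.sphere_nonempty.2 hr.le)
    (hg.continuousOn.mono (sphere_subset_closedBall.trans hrO)).norm
  have hgw : 0 < ‖g w‖ :=
    norm_pos_iff.2 ((hball (sphere_subset_closedBall hw)).1 (ne_of_mem_sphere hw hr.ne'))
  obtain ⟨n, hn⟩ := (Metric.tendstoUniformlyOn_iff.1
    ((tendstoLocallyUniformlyOn_iff_forall_isCompact hO).1 hlim _ hrO (isCompact_closedBall a r))
    (‖g w‖ / 2) (half_pos hgw)).exists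
  have hle : ‖g w‖ / 2 ≤ ‖G n a‖ := by
    refine le_norm_of_forall_sphere_le_norm hr (half_pos hgw) ((hG n).mono hrO)
      (fun z hz ↦ hG0 n z (hrO hz)) fun z hz ↦ ?_
    have hwz : ‖g w‖ ≤ ‖g z‖ := hmin hz
    have hdist := hn z (sphere_subset_closedBall hz)
    rw [dist_eq_norm] at hdist
    linarith [norm_sub_norm_le (g z) (G n z)]
  have hlt := hn a (mem_closedBall_self hr.le)
  rw [hga, dist_zero_left] at hlt
  exact hlt.not_ge hle

section Montel

variable {ι E F : Type*} [NormedAddCommGroup E] [NormedSpace ℂ E] [NormedAddCommGroup F]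
  [NormedSpace ℂ F] {V : Set E} {f : ι → E → F} {C : ℝ}

theorem equicontinuousAt_of_forall_norm_le {z : E} (hV : V ∈ 𝓝 z)
    (hf : ∀ i, DifferentiableOn ℂ (f i) V) (hC : ∀ i, ∀ z ∈ V, ‖f i z‖ ≤ C) :
    EquicontinuousAt f z := by
  obtain ⟨r, hr, hrV⟩ := Metric.mem_nhds_iff.1 hV
  refine Metric.equicontinuousAt_of_continuity_modulus (fun w ↦ (C + C) / r * dist w z) ?_ _ ?_
  · exact (by fun_prop : Continuous fun w ↦ (C + C) / r * dist w z).tendsto' _ _ (by simp)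
  · filter_upwards [ball_mem_nhds z hr] with w hw i
    rw [dist_comm]
    refine Complex.dist_le_div_mul_dist_of_mapsTo_ball ((hf i).mono hrV) (fun y hy ↦ ?_) hw
    rw [mem_closedBall, dist_eq_norm]
    exact norm_sub_le_of_le (hC i y (hrV hy)) (hC i z (hrV (mem_ball_self hr)))

/-- Montel's theorem, with an ultrafilter in place of a subsequence. -/
theorem exists_tendstoLocallyUniformlyOn_of_forall_norm_le [LocallyCompactSpace E] [ProperSpace F]
    (l : Ultrafilter ι) (hV : IsOpen V) (hf : ∀ i, DifferentiableOn ℂ (f i) V)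
    (hC : ∀ i, ∀ z ∈ V, ‖f i z‖ ≤ C) : ∃ g : E → F, TendstoLocallyUniformlyOn f g l V := by
  have hlim : ∀ z, ∃ y, z ∈ V → Tendsto (f · z) l (𝓝 y) := fun z ↦ by
    by_cases hz : z ∈ V
    · obtain ⟨y, -, hy⟩ := (isCompact_closedBall (0 : F) C).ultrafilter_le_nhds (l.map (f · z))
        (le_principal_iff.2 (Ultrafilter.mem_map.2
          (univ_mem' fun i ↦ mem_closedBall_zero_iff.2 (hC i z hz))))
      exact ⟨y, fun _ ↦ hy⟩
    · exact ⟨0, fun h ↦ (hz h).elim⟩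
  choose g hg using hlim
  refine ⟨g, (tendstoLocallyUniformlyOn_iff_forall_isCompact hV).2 fun K hKV hK ↦ ?_⟩
  have hequi : ∀ s ∈ ({K} : Set (Set E)), EquicontinuousOn f s := fun s hs z hz ↦
    have hzV := hV.mem_nhds (hKV (hs ▸ hz))
    (equicontinuousAt_of_forall_norm_le hzV hf hC).equicontinuousWithinAt s
  have hunif := (EquicontinuousOn.tendsto_uniformOnFun_iff_pi' (by simpa using hK) hequi l g).2
    (tendsto_pi_nhds.2 fun z ↦ hg z (hKV (by simpa using z.2)))
  exact UniformOnFun.tendsto_iff_tendstoUniformlyOn.1 hunif K rfl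

end Montel

/-- The automorphism of the unit disc sending `c` to `0`. -/
noncomputable def discAut (c w : ℂ) : ℂ := (w - c) / (1 - conj c * w)

section discAut

variable {c w w' : ℂ}

@[simp] theorem discAut_self (c : ℂ) : discAut c c = 0 := by simp [discAut]

theorem one_sub_conj_mul_ne_zero (hc : ‖c‖ < 1) (hw : ‖w‖ < 1) : 1 - conj c * w ≠ 0 := by
  refine sub_ne_zero.2 fun h ↦ ?_
  have hnorm : ‖c‖ * ‖w‖ = 1 := by simpa using congr(‖$h‖).symm
  exact (mul_lt_one_of_nonneg_of_lt_one_left (norm_nonneg c) hc hw.le).ne hnorm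

theorem norm_one_sub_conj_mul_self (hc : ‖c‖ < 1) : ‖1 - conj c * c‖ = 1 - ‖c‖ ^ 2 := by
  have hpos : 0 ≤ 1 - ‖c‖ ^ 2 := by nlinarith [norm_nonneg c]
  rw [Complex.conj_mul', ← Complex.ofReal_pow, ← Complex.ofReal_one, ← Complex.ofReal_sub,
    Complex.norm_real, Real.norm_of_nonneg hpos]

theorem norm_discAut_lt_one (hc : ‖c‖ < 1) (hw : ‖w‖ < 1) : ‖discAut c w‖ < 1 := by
  have hsq : ‖1 - conj c * w‖ ^ 2 - ‖w - c‖ ^ 2 = (1 - ‖c‖ ^ 2) * (1 - ‖w‖ ^ 2) := by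
    simp only [← Complex.normSq_eq_norm_sq, Complex.normSq_apply, Complex.sub_re, Complex.sub_im,
      Complex.mul_re, Complex.mul_im, Complex.conj_re, Complex.conj_im, Complex.one_re,
      Complex.one_im]
    ring
  have hpos : 0 < (1 - ‖c‖ ^ 2) * (1 - ‖w‖ ^ 2) := by
    refine mul_pos ?_ ?_ <;> nlinarith [norm_nonneg c, norm_nonneg w]
  rw [discAut, norm_div, div_lt_one (norm_pos_iff.2 (one_sub_conj_mul_ne_zero hc hw))]
  exact lt_of_pow_lt_pow_left₀ 2 (norm_nonneg _) (by linarith)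

theorem injOn_discAut (hc : ‖c‖ < 1) : InjOn (discAut c) (ball 0 1) := by
  intro w hw w' hw' h
  rw [mem_ball_zero_iff] at hw hw'
  rw [discAut, discAut, div_eq_div_iff (one_sub_conj_mul_ne_zero hc hw)
    (one_sub_conj_mul_ne_zero hc hw')] at h
  have hprod : (w - w') * (1 - conj c * c) = 0 := by linear_combination h
  exact sub_eq_zero.1 ((mul_eq_zero.1 hprod).resolve_right (one_sub_conj_mul_ne_zero hc hc))

theorem hasDerivAt_discAut (hc : ‖c‖ < 1) (hw : ‖w‖ < 1) :
    HasDerivAt (discAut c) ((1 - conj c * c) / (1 - conj c * w) ^ 2) w :=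
  (((hasDerivAt_id w).sub_const c).fun_div (((hasDerivAt_id w).const_mul (conj c)).const_sub 1)
    (one_sub_conj_mul_ne_zero hc hw)).congr_deriv (by simp only [id]; ring)

end discAut

/-- `f` is a univalent map of `V` into the unit disc. The nonvanishing of the derivative, which
holds for every univalent map, is included for convenience. -/
structure IsUnivalentIntoDisc (V : Set ℂ) (f : ℂ → ℂ) : Prop where
  differentiableOn : DifferentiableOn ℂ f V
  injOn : InjOn f V
  deriv_ne_zero : ∀ z ∈ V, deriv f z ≠ 0
  mapsTo : MapsTo f V (ball 0 1)

namespace IsUnivalentIntoDisc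

variable {V : Set ℂ} {f : ℂ → ℂ} {a c : ℂ}

theorem norm_lt_one (hf : IsUnivalentIntoDisc V f) {z : ℂ} (hz : z ∈ V) : ‖f z‖ < 1 :=
  mem_ball_zero_iff.1 (hf.mapsTo hz)

theorem hasDerivAt (hf : IsUnivalentIntoDisc V f) (hV : IsOpen V) {z : ℂ} (hz : z ∈ V) :
    HasDerivAt f (deriv f z) z :=
  (hf.differentiableOn.differentiableAt (hV.mem_nhds hz)).hasDerivAt

theorem isOpen_image (hf : IsUnivalentIntoDisc V f) (hV : IsOpen V) {O : Set ℂ} (hOV : O ⊆ V)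
    (hO : IsOpen O) : IsOpen (f '' O) :=
  isOpen_image_of_deriv_ne_zero hV hf.differentiableOn hf.deriv_ne_zero hOV hO

theorem exists_of_isBounded (hV : IsBounded V) : ∃ f, IsUnivalentIntoDisc V f := by
  obtain ⟨R, hR0, hR⟩ := hV.subset_ball_lt 0 (0 : ℂ)
  have hRc : (R : ℂ) ≠ 0 := Complex.ofReal_ne_zero.2 hR0.ne'
  refine ⟨fun z ↦ z / R, by fun_prop, fun z _ w _ h ↦ by simpa [hRc] using h,
    fun z _ ↦ by simp [hRc], fun z hz ↦ ?_⟩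
  rw [mem_ball_zero_iff, norm_div, Complex.norm_real, Real.norm_of_nonneg hR0.le, div_lt_one hR0]
  exact mem_ball_zero_iff.1 (hR hz)

theorem hasDerivAt_discAut_comp (hf : IsUnivalentIntoDisc V f) (hV : IsOpen V) (hc : ‖c‖ < 1)
    {z : ℂ} (hz : z ∈ V) : HasDerivAt (fun z ↦ discAut c (f z))
      ((1 - conj c * c) / (1 - conj c * f z) ^ 2 * deriv f z) z :=
  (hasDerivAt_discAut hc (hf.norm_lt_one hz)).comp z (hf.hasDerivAt hV hz)

theorem discAut_comp (hf : IsUnivalentIntoDisc V f) (hV : IsOpen V) (hc : ‖c‖ < 1) :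
    IsUnivalentIntoDisc V (fun z ↦ discAut c (f z)) where
  differentiableOn z hz :=
    (hf.hasDerivAt_discAut_comp hV hc hz).differentiableAt.differentiableWithinAt
  injOn := (injOn_discAut hc).comp hf.injOn hf.mapsTo
  deriv_ne_zero z hz := by
    rw [(hf.hasDerivAt_discAut_comp hV hc hz).deriv]
    exact mul_ne_zero (div_ne_zero (one_sub_conj_mul_ne_zero hc hc)
      (pow_ne_zero 2 (one_sub_conj_mul_ne_zero hc (hf.norm_lt_one hz)))) (hf.deriv_ne_zero z hz)
  mapsTo z hz := mem_ball_zero_iff.2 (norm_discAut_lt_one hc (hf.norm_lt_one hz))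

theorem norm_deriv_discAut_comp_self (hf : IsUnivalentIntoDisc V f) (hV : IsOpen V) (ha : a ∈ V) :
    ‖deriv (fun z ↦ discAut (f a) (f z)) a‖ = ‖deriv f a‖ / (1 - ‖f a‖ ^ 2) := by
  have hfa := hf.norm_lt_one ha
  have hne : 1 - ‖f a‖ ^ 2 ≠ 0 := by nlinarith [norm_nonneg (f a)]
  rw [(hf.hasDerivAt_discAut_comp hV hfa ha).deriv, norm_mul, norm_div, norm_pow,
    norm_one_sub_conj_mul_self hfa]
  field

theorem exists_sq_eq (hf : IsUnivalentIntoDisc V f) (hV : IsOpen V) (hlog : HasLogOn f V) :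
    ∃ s, IsUnivalentIntoDisc V s ∧ (∀ z ∈ V, s z ^ 2 = f z) ∧
      ∀ z ∈ V, deriv f z = 2 * s z * deriv s z := by
  obtain ⟨g, hg, hgf⟩ := hlog
  set s : ℂ → ℂ := fun z ↦ Complex.exp (g z / 2)
  have hs0 : ∀ z, s z ≠ 0 := fun z ↦ Complex.exp_ne_zero _
  have hsf : ∀ z ∈ V, s z ^ 2 = f z := fun z hz ↦ by
    rw [← Complex.exp_nat_mul, ← hgf z hz, Nat.cast_ofNat, mul_div_cancel₀ _ two_ne_zero]
  have hs : ∀ z ∈ V, HasDerivAt s (deriv f z / (2 * s z)) z := fun z hz ↦ by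
    have hsc : ContinuousOn s V := by fun_prop
    refine HasDerivAt.of_comp_left (f := (· ^ 2)) (hsc.continuousAt (hV.mem_nhds hz))
      (by simpa using hasDerivAt_pow 2 (s z)) (hf.hasDerivAt hV hz) (by simpa using hs0 z)
      (mem_of_superset (hV.mem_nhds hz) hsf)
  have hs' : ∀ z ∈ V, deriv f z = 2 * s z * deriv s z := fun z hz ↦ by
    rw [(hs z hz).deriv, mul_div_cancel₀ _ (mul_ne_zero two_ne_zero (hs0 z))]
  refine ⟨s, ⟨fun z hz ↦ (hs z hz).differentiableAt.differentiableWithinAt, fun z hz w hw h ↦ ?_,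
    fun z hz h ↦ hf.deriv_ne_zero z hz (by rw [hs' z hz, h, mul_zero]), fun z hz ↦ ?_⟩, hsf, hs'⟩
  · exact hf.injOn hz hw (by rw [← hsf z hz, ← hsf w hw, h])
  · have hsq := hf.norm_lt_one hz
    rw [← hsf z hz, norm_pow] at hsq
    exact mem_ball_zero_iff.2 ((pow_lt_one_iff_of_nonneg (norm_nonneg _) two_ne_zero).1 hsq)

/-- Koebe's square root trick. -/
theorem exists_norm_deriv_lt (hf : IsUnivalentIntoDisc V f) (hV : IsOpen V) (hVb : IsBounded V)
    (hVc : IsPreconnected V) (hVcc : IsPreconnected Vᶜ) (ha : a ∈ V) (hfa : f a = 0)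
    (hc : ‖c‖ < 1) (hcV : c ∉ f '' V) :
    ∃ k, IsUnivalentIntoDisc V k ∧ ‖deriv f a‖ < ‖deriv k a‖ := by
  set T : ℂ → ℂ := fun z ↦ discAut c (f z)
  have hT : IsUnivalentIntoDisc V T := hf.discAut_comp hV hc
  have hT0 : (0 : ℂ) ∉ T '' V := by
    rintro ⟨z, hz, hTz⟩
    exact hcV ⟨z, hz, injOn_discAut hc (hf.mapsTo hz) (mem_ball_zero_iff.2 hc)
      (hTz.trans (discAut_self c).symm)⟩
  have hlog : HasLogOn T V := (HasLogOn.sub_of_injOn hV hVb ⟨⟨a, ha⟩, hVc⟩ hVcc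
    hT.differentiableOn.continuousOn (hT.isOpen_image hV subset_rfl hV) hT.injOn hT0).congr
    fun z _ ↦ sub_zero _
  obtain ⟨s, hs, hsT, hsT'⟩ := hT.exists_sq_eq hV hlog
  have hsa := hs.norm_lt_one ha
  have hsc : ‖c‖ = ‖s a‖ ^ 2 := by rw [← norm_pow, hsT a ha]; simp [T, hfa, discAut]
  have hf' : (1 - ‖c‖ ^ 2) * ‖deriv f a‖ = 2 * ‖s a‖ * ‖deriv s a‖ := by
    have hTa := hsT' a ha
    rw [(hf.hasDerivAt_discAut_comp hV hc ha).deriv, hfa, mul_zero, sub_zero, one_pow,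
      div_one] at hTa
    simpa [norm_one_sub_conj_mul_self hc] using congrArg norm hTa
  refine ⟨_, hs.discAut_comp hV hsa, ?_⟩
  rw [hs.norm_deriv_discAut_comp_self hV ha, lt_div_iff₀ (by nlinarith [norm_nonneg (s a)])]
  have hs'pos : 0 < ‖deriv s a‖ := norm_pos_iff.2 (hs.deriv_ne_zero a ha)
  have h1 : 2 * ‖s a‖ < 1 + ‖s a‖ ^ 2 := by nlinarith [sq_pos_of_pos (sub_pos.2 hsa)]
  refine lt_of_mul_lt_mul_left (a := 1 + ‖s a‖ ^ 2) ?_ (by positivity)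
  calc (1 + ‖s a‖ ^ 2) * (‖deriv f a‖ * (1 - ‖s a‖ ^ 2))
      = (1 - ‖c‖ ^ 2) * ‖deriv f a‖ := by rw [hsc]; ring
    _ = 2 * ‖s a‖ * ‖deriv s a‖ := hf'
    _ < (1 + ‖s a‖ ^ 2) * ‖deriv s a‖ := mul_lt_mul_of_pos_right h1 hs'pos

theorem norm_deriv_le_inv (hf : IsUnivalentIntoDisc V f) {r : ℝ} (hr : 0 < r)
    (hrV : closedBall a r ⊆ V) : ‖deriv f a‖ ≤ 1 / r := by
  refine Complex.norm_deriv_le_of_forall_mem_sphere_norm_le hr ?_ fun z hz ↦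
    (hf.norm_lt_one (hrV (sphere_subset_closedBall hz))).le
  exact (closure_ball a hr.ne' ▸ hf.differentiableOn.mono hrV).diffContOnCl

variable {ι : Type*} {l : Filter ι} [l.NeBot] {F : ι → ℂ → ℂ}

theorem injOn_of_tendstoLocallyUniformlyOn (hF : ∀ n, IsUnivalentIntoDisc V (F n))
    (hV : IsOpen V) (hlim : TendstoLocallyUniformlyOn F f l V) (hf' : ∀ z ∈ V, deriv f z ≠ 0) :
    InjOn f V := by
  intro a ha b hb hab
  by_contra hne
  have hlim' : TendstoLocallyUniformlyOn (fun n z ↦ F n z - F n b) (fun z ↦ f z - f b) l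
      (V \ {b}) := uniformContinuous_sub.comp_tendstoLocallyUniformlyOn
    ((hlim.mono sdiff_subset).prodMk
      ((hlim.tendsto_at hb).tendstoUniformlyOn_const _).tendstoLocallyUniformlyOn)
  have hzero := eventually_eq_zero_of_tendstoLocallyUniformlyOn (hV.sdiff isClosed_singleton)
    (fun n ↦ ((hF n).differentiableOn.mono sdiff_subset).sub_const _)
    (fun n z hz h ↦ hz.2 ((hF n).injOn hz.1 hb (sub_eq_zero.1 h))) hlim' ⟨ha, hne⟩
    (sub_eq_zero.2 hab)
  have hconst : f =ᶠ[𝓝 a] fun _ ↦ f b := hzero.mono fun z hz ↦ sub_eq_zero.1 hz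
  exact hf' a ha (by rw [hconst.deriv_eq, deriv_const])

theorem of_tendstoLocallyUniformlyOn (hF : ∀ n, IsUnivalentIntoDisc V (F n)) (hV : IsOpen V)
    (hVc : IsPreconnected V) (hlim : TendstoLocallyUniformlyOn F f l V) (ha : a ∈ V)
    (hfa : deriv f a ≠ 0) : IsUnivalentIntoDisc V f := by
  have hFd : ∀ᶠ n in l, DifferentiableOn ℂ (F n) V := .of_forall fun n ↦ (hF n).differentiableOn
  have hf : DifferentiableOn ℂ f V := hlim.differentiableOn hFd hV
  have hf' : ∀ z ∈ V, deriv f z ≠ 0 := fun z hz h ↦ hfa <|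
    ((hf.deriv hV).analyticOnNhd hV).eqOn_zero_of_preconnected_of_eventuallyEq_zero hVc hz
      (eventually_eq_zero_of_tendstoLocallyUniformlyOn hV
        (fun n ↦ (hF n).differentiableOn.deriv hV) (fun n ↦ (hF n).deriv_ne_zero)
        (hlim.deriv hFd hV) hz h) ha
  refine ⟨hf, injOn_of_tendstoLocallyUniformlyOn hF hV hlim hf', hf', mapsTo_iff_image_subset.2 ?_⟩
  rw [← interior_closedBall (0 : ℂ) one_ne_zero]
  refine interior_maximal ?_ (isOpen_image_of_deriv_ne_zero hV hf hf' subset_rfl hV)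
  rintro _ ⟨z, hz, rfl⟩
  exact mem_closedBall_zero_iff.2 <| le_of_tendsto (hlim.tendsto_at hz).norm <|
    .of_forall fun n ↦ ((hF n).norm_lt_one hz).le

theorem exists_forall_norm_deriv_le (hV : IsOpen V) (hVb : IsBounded V) (hVc : IsPreconnected V)
    (ha : a ∈ V) : ∃ f, IsUnivalentIntoDisc V f ∧
      ∀ k, IsUnivalentIntoDisc V k → ‖deriv k a‖ ≤ ‖deriv f a‖ := by
  set S : Set ℝ := {x | ∃ f, IsUnivalentIntoDisc V f ∧ ‖deriv f a‖ = x}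
  obtain ⟨f₀, hf₀⟩ := exists_of_isBounded hVb
  have hSb : BddAbove S := by
    obtain ⟨r, hr, hrV⟩ := Metric.nhds_basis_closedBall.mem_iff.1 (hV.mem_nhds ha)
    exact ⟨1 / r, by rintro _ ⟨f, hf, rfl⟩; exact hf.norm_deriv_le_inv hr hrV⟩
  have hle : ∀ k, IsUnivalentIntoDisc V k → ‖deriv k a‖ ≤ sSup S := fun k hk ↦
    le_csSup hSb ⟨k, hk, rfl⟩
  obtain ⟨u, -, hu, huS⟩ := exists_seq_tendsto_sSup (show S.Nonempty from ⟨_, f₀, hf₀, rfl⟩) hSb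
  choose F hF hFu using huS
  obtain ⟨f, hlim⟩ := exists_tendstoLocallyUniformlyOn_of_forall_norm_le (hyperfilter ℕ) hV
    (fun n ↦ (hF n).differentiableOn) fun n z hz ↦ ((hF n).norm_lt_one hz).le
  have hfS : ‖deriv f a‖ = sSup S := by
    refine tendsto_nhds_unique ((hlim.deriv (.of_forall fun n ↦ (hF n).differentiableOn)
      hV).tendsto_at ha).norm ?_
    exact (hu.mono_left Nat.hyperfilter_le_atTop).congr fun n ↦ (hFu n).symm
  have hfa : deriv f a ≠ 0 := norm_pos_iff.1 <|
    hfS ▸ (norm_pos_iff.2 (hf₀.deriv_ne_zero a ha)).trans_le (hle f₀ hf₀)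
  exact ⟨f, of_tendstoLocallyUniformlyOn hF hV hVc hlim ha hfa, hfS ▸ hle⟩

/-- The Riemann mapping theorem for bounded domains. -/
theorem exists_image_eq_ball (hV : IsOpen V) (hVb : IsBounded V) (hVc : IsPreconnected V)
    (hVcc : IsPreconnected Vᶜ) (ha : a ∈ V) :
    ∃ f, IsUnivalentIntoDisc V f ∧ f a = 0 ∧ f '' V = ball 0 1 := by
  obtain ⟨f, hf, hmax⟩ := exists_forall_norm_deriv_le hV hVb hVc ha
  have hfa : f a = 0 := by
    by_contra hne
    have hle := hmax _ (hf.discAut_comp hV (hf.norm_lt_one ha))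
    have hpos : 0 < ‖f a‖ ^ 2 := pow_pos (norm_pos_iff.2 hne) 2
    have hlt : 0 < 1 - ‖f a‖ ^ 2 := by nlinarith [hf.norm_lt_one ha, norm_nonneg (f a)]
    rw [hf.norm_deriv_discAut_comp_self hV ha, div_le_iff₀ hlt] at hle
    nlinarith [norm_pos_iff.2 (hf.deriv_ne_zero a ha)]
  refine ⟨f, hf, hfa, hf.mapsTo.image_subset.antisymm fun c hc ↦ ?_⟩
  by_contra hcV
  obtain ⟨k, hk, hlt⟩ :=
    hf.exists_norm_deriv_lt hV hVb hVc hVcc ha hfa (mem_ball_zero_iff.1 hc) hcV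
  exact (hmax k hk).not_gt hlt

end IsUnivalentIntoDisc

/-! ### The length–area method -/

theorem det_restrictScalars_eq_norm_sq (L : ℂ →L[ℂ] ℂ) : (L.restrictScalars ℝ).det = ‖L 1‖ ^ 2 := by
  change LinearMap.det ((L : ℂ →ₗ[ℂ] ℂ).restrictScalars ℝ) = _
  rw [LinearMap.det_restrictScalars, LinearMap.det_ring, Algebra.norm_complex_apply,
    Complex.normSq_eq_norm_sq, ContinuousLinearMap.coe_coe]

theorem lintegral_norm_deriv_sq_eq_volume_image {Ω : Set ℂ} (hΩ : IsOpen Ω) {g : ℂ → ℂ}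
    (hg : DifferentiableOn ℂ g Ω) (hinj : InjOn g Ω) :
    ∫⁻ z in Ω, ENNReal.ofReal (‖deriv g z‖ ^ 2) = MeasureTheory.volume (g '' Ω) := by
  have hg' : ∀ z ∈ Ω, HasFDerivWithinAt g ((fderiv ℂ g z).restrictScalars ℝ) Ω z := fun z hz ↦
    ((hg.differentiableAt (hΩ.mem_nhds hz)).hasFDerivAt.restrictScalars ℝ).hasFDerivWithinAt
  rw [← MeasureTheory.lintegral_abs_det_fderiv_eq_addHaar_image _ hΩ.measurableSet hg' hinj]
  simp only [det_restrictScalars_eq_norm_sq, fderiv_apply_one_eq_deriv, abs_pow, abs_norm]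

theorem sq_norm_sub_le_mul_integral_sq_norm {E : Type*} [NormedAddCommGroup E] [NormedSpace ℝ E]
    [CompleteSpace E] {F F' : ℝ → E} {a b : ℝ} (hab : a ≤ b)
    (hF : ∀ t ∈ Icc a b, HasDerivAt F (F' t) t) (hF' : ContinuousOn F' (Icc a b)) :
    ‖F b - F a‖ ^ 2 ≤ (b - a) * ∫ t in a..b, ‖F' t‖ ^ 2 := by
  obtain rfl | hlt := hab.eq_or_lt
  · simp
  rw [← uIcc_of_le hab] at hF hF'
  set d := ‖F b - F a‖
  have hsq : IntervalIntegrable (fun t ↦ ‖F' t‖ ^ 2) MeasureTheory.volume a b :=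
    (hF'.norm.pow 2).intervalIntegrable
  have hd : d ≤ ∫ t in a..b, ‖F' t‖ := by
    rw [show d = ‖∫ t in a..b, F' t‖ by
      rw [intervalIntegral.integral_eq_sub_of_hasDerivAt hF hF'.intervalIntegrable]]
    exact intervalIntegral.norm_integral_le_integral_norm hab
  have hexpand : ∫ t in a..b, ((b - a) * ‖F' t‖ - d) ^ 2 =
      (b - a) ^ 2 * (∫ t in a..b, ‖F' t‖ ^ 2) - 2 * (b - a) * d * (∫ t in a..b, ‖F' t‖)
        + (b - a) * d ^ 2 := by
    rw [← intervalIntegral.integral_const_mul, ← intervalIntegral.integral_const_mul,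
      ← smul_eq_mul (b - a) (d ^ 2), ← intervalIntegral.integral_const,
      ← intervalIntegral.integral_sub (hsq.const_mul _) (hF'.norm.intervalIntegrable.const_mul _),
      ← intervalIntegral.integral_add ((hsq.const_mul _).sub
        (hF'.norm.intervalIntegrable.const_mul _)) intervalIntegrable_const]
    congr 1 with t
    ring
  have hnonneg : 0 ≤ ∫ t in a..b, ((b - a) * ‖F' t‖ - d) ^ 2 :=
    intervalIntegral.integral_nonneg hab fun _ _ ↦ sq_nonneg _
  have hba : 0 < b - a := sub_pos.2 hlt
  have hdd : (b - a) * d * d ≤ (b - a) * d * ∫ t in a..b, ‖F' t‖ :=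
    mul_le_mul_of_nonneg_left hd (mul_nonneg hba.le (norm_nonneg _))
  refine le_of_mul_le_mul_left ?_ hba
  linarith

theorem sq_dist_div_le_lintegral_arc {Ω : Set ℂ} (hΩ : IsOpen Ω) {g : ℂ → ℂ}
    (hg : DifferentiableOn ℂ g Ω) {r a b : ℝ} (hr : 0 < r) (hab : a ≤ b) (hb : b - a ≤ 2 * π)
    (harc : ∀ t ∈ Icc a b, circleMap 0 r t ∈ Ω) :
    ENNReal.ofReal (dist (g (circleMap 0 r a)) (g (circleMap 0 r b)) ^ 2 / (2 * π) / r) ≤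
      ∫⁻ t in Ioc a b, ENNReal.ofReal r * ENNReal.ofReal (‖deriv g (circleMap 0 r t)‖ ^ 2) := by
  have hderiv : ∀ t ∈ Icc a b, HasDerivAt (fun t ↦ g (circleMap 0 r t))
      (deriv g (circleMap 0 r t) * (circleMap 0 r t * Complex.I)) t := fun t ht ↦
    (hg.differentiableAt (hΩ.mem_nhds (harc t ht))).hasDerivAt.comp t (hasDerivAt_circleMap 0 r t)
  have hcont : ContinuousOn (fun t ↦ deriv g (circleMap 0 r t)) (Icc a b) :=
    (hg.deriv hΩ).continuousOn.comp (continuous_circleMap 0 r).continuousOn harc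
  have hlength := sq_norm_sub_le_mul_integral_sq_norm hab hderiv
    (hcont.mul ((continuous_circleMap 0 r).mul continuous_const).continuousOn)
  set J := ∫ t in a..b, r * ‖deriv g (circleMap 0 r t)‖ ^ 2
  have hJ : ∫ t in a..b, ‖deriv g (circleMap 0 r t) * (circleMap 0 r t * Complex.I)‖ ^ 2 =
      r * J := by
    rw [← intervalIntegral.integral_const_mul]
    congr 1 with t
    rw [norm_mul, norm_mul, norm_circleMap_zero, Complex.norm_I, abs_of_pos hr]
    ring
  have hJ0 : 0 ≤ J := intervalIntegral.integral_nonneg hab fun _ _ ↦ by positivity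
  have hle : dist (g (circleMap 0 r a)) (g (circleMap 0 r b)) ^ 2 / (2 * π) / r ≤ J := by
    rw [div_div, div_le_iff₀ (by positivity), dist_comm, dist_eq_norm]
    calc _ ≤ (b - a) * (r * J) := hJ ▸ hlength
      _ ≤ 2 * π * (r * J) := by gcongr
      _ = J * (2 * π * r) := by ring
  refine (ENNReal.ofReal_le_ofReal hle).trans_eq ?_
  simp_rw [← ENNReal.ofReal_mul hr.le]
  rw [← MeasureTheory.ofReal_integral_eq_lintegral_ofReal,
    ← intervalIntegral.integral_of_le hab]
  · rw [← uIcc_of_le hab] at hcont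
    exact (intervalIntegrable_iff_integrableOn_Ioc_of_le hab).1
      (continuousOn_const.mul (hcont.norm.pow 2)).intervalIntegrable
  · exact Eventually.of_forall fun t ↦ by positivity

theorem lintegral_Ioo_ofReal_div_eq_top {ρ c : ℝ} (hρ : 0 < ρ) (hc : 0 < c) :
    ∫⁻ r in Ioo 0 ρ, ENNReal.ofReal (c / r) = ⊤ := by
  by_contra hfin
  have hdiv : MeasureTheory.IntegrableOn (fun r ↦ c / r) (Ioo 0 ρ) := by
    refine ⟨by fun_prop, ?_⟩
    rw [MeasureTheory.hasFiniteIntegral_iff_ofReal]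
    · exact lt_top_iff_ne_top.2 hfin
    · exact (MeasureTheory.ae_restrict_iff' measurableSet_Ioo).2
        (Eventually.of_forall fun r hr ↦ div_nonneg hc.le hr.1.le)
  have hinv : IntervalIntegrable (fun r : ℝ ↦ r⁻¹) MeasureTheory.volume 0 ρ := by
    rw [intervalIntegrable_iff_integrableOn_Ioo_of_le hρ.le]
    exact (hdiv.const_mul c⁻¹).congr (Eventually.of_forall fun r ↦ by field_simp)
  rw [intervalIntegrable_inv_iff] at hinv
  exact hinv.elim hρ.ne fun h ↦ h left_mem_uIcc

theorem lintegral_eq_lintegral_circleMap {f : ℂ → ENNReal} (hf : Measurable f) :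
    ∫⁻ z, f z =
      ∫⁻ r in Ioi (0 : ℝ), ∫⁻ t in Ioo (-π) π, ENNReal.ofReal r * f (circleMap 0 r t) := by
  have hpolar : ∀ p : ℝ × ℝ, Complex.polarCoord.symm p = circleMap 0 p.1 p.2 := fun p ↦ by
    simp [circleMap, Complex.exp_mul_I]
  rw [← Complex.lintegral_comp_polarCoord_symm, polarCoord_target,
    MeasureTheory.Measure.volume_eq_prod, MeasureTheory.setLIntegral_prod]
  · simp_rw [hpolar, smul_eq_mul]
  · simp_rw [hpolar, smul_eq_mul, circleMap]
    fun_prop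

/- If all the arcs had long images, the image would have infinite area, because
`∫ dr / r` diverges at `0`. -/
theorem exists_forall_arc_dist_lt {Ω : Set ℂ} (hΩ : IsOpen Ω) {g : ℂ → ℂ}
    (hg : DifferentiableOn ℂ g Ω) (hinj : InjOn g Ω) (hvol : MeasureTheory.volume (g '' Ω) ≠ ⊤)
    {δ ρ : ℝ} (hδ : 0 < δ) (hρ : 0 < ρ) :
    ∃ r ∈ Ioo 0 ρ, ∀ a ∈ Ioo (-π) π, ∀ b ∈ Ioo (-π) π, a ≤ b →
      (∀ t ∈ Icc a b, circleMap 0 r t ∈ Ω) →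
      dist (g (circleMap 0 r a)) (g (circleMap 0 r b)) < δ := by
  by_contra! hcon
  set f : ℂ → ENNReal := Ω.indicator fun z ↦ ENNReal.ofReal (‖deriv g z‖ ^ 2)
  have hf : Measurable f :=
    ((measurable_deriv g).norm.pow_const 2).ennreal_ofReal.indicator hΩ.measurableSet
  have hcircle : ∀ r ∈ Ioo 0 ρ, ENNReal.ofReal (δ ^ 2 / (2 * π) / r) ≤
      ∫⁻ t in Ioo (-π) π, ENNReal.ofReal r * f (circleMap 0 r t) := by
    intro r hr
    obtain ⟨a, ha, b, hb, hab, harc, hdist⟩ := hcon r hr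
    have hr0 : 0 < r := hr.1
    calc ENNReal.ofReal (δ ^ 2 / (2 * π) / r)
        ≤ ENNReal.ofReal (dist (g (circleMap 0 r a)) (g (circleMap 0 r b)) ^ 2 / (2 * π) / r) := by
          gcongr
      _ ≤ ∫⁻ t in Ioc a b, ENNReal.ofReal r * ENNReal.ofReal (‖deriv g (circleMap 0 r t)‖ ^ 2) :=
          sq_dist_div_le_lintegral_arc hΩ hg hr0 hab (by linarith [ha.1, hb.2]) harc
      _ = ∫⁻ t in Ioc a b, ENNReal.ofReal r * f (circleMap 0 r t) :=
          MeasureTheory.setLIntegral_congr_fun measurableSet_Ioc fun t ht ↦ by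
            rw [show f (circleMap 0 r t) = _ from
              indicator_of_mem (harc t (Ioc_subset_Icc_self ht)) _]
      _ ≤ ∫⁻ t in Ioo (-π) π, ENNReal.ofReal r * f (circleMap 0 r t) :=
          MeasureTheory.lintegral_mono_set
            ((Ioc_subset_Ioc_left ha.1.le).trans (Ioc_subset_Ioo_right hb.2))
  refine hvol (top_le_iff.1 ?_)
  calc ⊤ = ∫⁻ r in Ioo 0 ρ, ENNReal.ofReal (δ ^ 2 / (2 * π) / r) :=
        (lintegral_Ioo_ofReal_div_eq_top hρ (by positivity)).symm
    _ ≤ ∫⁻ r in Ioo 0 ρ, ∫⁻ t in Ioo (-π) π, ENNReal.ofReal r * f (circleMap 0 r t) :=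
        MeasureTheory.setLIntegral_mono' measurableSet_Ioo hcircle
    _ ≤ ∫⁻ r in Ioi (0 : ℝ), ∫⁻ t in Ioo (-π) π, ENNReal.ofReal r * f (circleMap 0 r t) :=
        MeasureTheory.lintegral_mono_set Ioo_subset_Ioi_self
    _ = ∫⁻ z, f z := (lintegral_eq_lintegral_circleMap hf).symm
    _ = MeasureTheory.volume (g '' Ω) := by
        rw [MeasureTheory.lintegral_indicator hΩ.measurableSet,
          lintegral_norm_deriv_sq_eq_volume_image hΩ hg hinj]

theorem circleMap_mem_ball_one_iff {r : ℝ} (hr : 0 < r) (t : ℝ) :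
    circleMap 0 r t ∈ ball (1 : ℂ) 1 ↔ r / 2 < Real.cos t := by
  have hnorm : ‖circleMap 0 r t - 1‖ ^ 2 = r ^ 2 - 2 * r * Real.cos t + 1 := by
    rw [← Complex.normSq_eq_norm_sq, Complex.normSq_apply, circleMap, Complex.exp_mul_I,
      ← Complex.ofReal_cos, ← Complex.ofReal_sin]
    simp only [Complex.sub_re, Complex.sub_im, Complex.add_re, Complex.add_im,
      Complex.re_ofReal_mul, Complex.im_ofReal_mul, Complex.ofReal_re, Complex.ofReal_im,
      Complex.I_re, Complex.I_im, Complex.one_re, Complex.one_im, Complex.zero_re, Complex.zero_im]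
    linear_combination r ^ 2 * Real.sin_sq_add_cos_sq t
  rw [mem_ball, Complex.dist_eq, ← sq_lt_one_iff₀ (norm_nonneg _), hnorm]
  constructor <;> intro h <;> nlinarith

theorem lt_cos_of_mem_Icc {a b c t : ℝ} (ha : a ∈ Ioo (-π) π) (hb : b ∈ Ioo (-π) π)
    (hca : c < Real.cos a) (hcb : c < Real.cos b) (ht : t ∈ Icc a b) : c < Real.cos t := by
  rcases le_total 0 t with h0 | h0
  · exact hcb.trans_le (Real.cos_le_cos_of_nonneg_of_le_pi h0 hb.2.le ht.2)
  · rw [← Real.cos_neg] at hca ⊢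
    exact hca.trans_le (Real.cos_le_cos_of_nonneg_of_le_pi (neg_nonneg.2 h0)
      (neg_le.1 ha.1.le) (neg_le_neg ht.1))

theorem exists_forall_norm_eq_dist_lt {g : ℂ → ℂ} (hg : DifferentiableOn ℂ g (ball 1 1))
    (hinj : InjOn g (ball 1 1)) (hvol : MeasureTheory.volume (g '' ball 1 1) ≠ ⊤)
    {δ ρ : ℝ} (hδ : 0 < δ) (hρ : 0 < ρ) :
    ∃ r ∈ Ioo 0 ρ, ∀ z ∈ ball (1 : ℂ) 1, ∀ w ∈ ball (1 : ℂ) 1, ‖z‖ = r → ‖w‖ = r →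
      dist (g z) (g w) < δ := by
  obtain ⟨r, hr, harc⟩ := exists_forall_arc_dist_lt isOpen_ball hg hinj hvol hδ hρ
  have hpolar : ∀ z ∈ ball (1 : ℂ) 1, ‖z‖ = r →
      ∃ t ∈ Ioo (-π) π, circleMap 0 r t = z ∧ r / 2 < Real.cos t := by
    rintro z hz rfl
    have hz' : circleMap 0 ‖z‖ z.arg = z := by simp [circleMap]
    have hcos := (circleMap_mem_ball_one_iff hr.1 z.arg).1 (hz'.symm ▸ hz)
    refine ⟨z.arg, ⟨Complex.neg_pi_lt_arg z, (Complex.arg_le_pi z).lt_of_ne fun h ↦ ?_⟩, hz', hcos⟩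
    rw [h, Real.cos_pi] at hcos
    linarith [hr.1]
  have hlt : ∀ a ∈ Ioo (-π) π, ∀ b ∈ Ioo (-π) π, a ≤ b → r / 2 < Real.cos a → r / 2 < Real.cos b →
      dist (g (circleMap 0 r a)) (g (circleMap 0 r b)) < δ := fun a ha b hb hab hca hcb ↦
    harc a ha b hb hab fun t ht ↦
      (circleMap_mem_ball_one_iff hr.1 t).2 (lt_cos_of_mem_Icc ha hb hca hcb ht)
  refine ⟨r, hr, fun z hz w hw hzr hwr ↦ ?_⟩
  obtain ⟨a, ha, rfl, hca⟩ := hpolar z hz hzr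
  obtain ⟨b, hb, rfl, hcb⟩ := hpolar w hw hwr
  rcases le_total a b with hab | hba
  · exact hlt a ha b hb hab hca hcb
  · exact dist_comm (g _) _ ▸ hlt b hb a ha hba hcb hca

theorem exists_forall_dist_eq_dist_lt {f : ℂ → ℂ} (hf : DifferentiableOn ℂ f (ball 0 1))
    (hinj : InjOn f (ball 0 1)) (hvol : MeasureTheory.volume (f '' ball 0 1) ≠ ⊤) {ζ : ℂ}
    (hζ : ‖ζ‖ = 1) {δ ρ : ℝ} (hδ : 0 < δ) (hρ : 0 < ρ) :
    ∃ r ∈ Ioo 0 ρ, ∀ z ∈ ball (0 : ℂ) 1, ∀ w ∈ ball (0 : ℂ) 1, dist z ζ = r → dist w ζ = r →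
      dist (f z) (f w) < δ := by
  have hζ0 : ζ ≠ 0 := norm_ne_zero_iff.1 (hζ ▸ one_ne_zero)
  have hmaps : MapsTo (fun z ↦ ζ * (1 - z)) (ball 1 1) (ball 0 1) := fun z hz ↦ by
    simpa [hζ, dist_eq_norm, norm_sub_rev] using hz
  have hinv : ∀ z, ζ * (1 - (1 - z / ζ)) = z := fun z ↦ by field_simp; ring
  have hnorm : ∀ z : ℂ, ‖1 - z / ζ‖ = dist z ζ := fun z ↦ by
    rw [dist_comm, dist_eq_norm, ← one_mul ‖1 - z / ζ‖, ← hζ, ← norm_mul, mul_sub, mul_one,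
      mul_div_cancel₀ _ hζ0]
  have hball : ∀ z ∈ ball (0 : ℂ) 1, 1 - z / ζ ∈ ball (1 : ℂ) 1 := fun z hz ↦ by
    simpa [dist_eq_norm, hζ] using hz
  obtain ⟨r, hr, h⟩ := exists_forall_norm_eq_dist_lt (g := fun z ↦ f (ζ * (1 - z)))
    (hf.comp (by fun_prop) hmaps)
    (hinj.comp (fun z _ w _ hzw ↦ by simpa using mul_left_cancel₀ hζ0 hzw) hmaps)
    (MeasureTheory.measure_ne_top_of_subset
      (image_comp f _ _ ▸ Set.image_mono hmaps.image_subset) hvol)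
    hδ hρ
  refine ⟨r, hr, fun z hz w hw hzr hwr ↦ ?_⟩
  simpa only [hinv] using
    h _ (hball z hz) _ (hball w hw) (by rw [hnorm, hzr]) (by rw [hnorm, hwr])

theorem isPreconnected_sdiff_singleton_of_mem_nhds {X : Type*} [TopologicalSpace X] [T1Space X]
    {s t : Set X} {x : X} (hs : IsPreconnected s) (hts : t ⊆ s) (ht : t ∈ 𝓝 x)
    (htx : IsPreconnected (t \ {x})) : IsPreconnected (s \ {x}) := by
  have key : ∀ u v, IsOpen u → IsOpen v → s \ {x} ⊆ u ∪ v → s \ {x} ∩ (u ∩ v) = ∅ →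
      t \ {x} ⊆ u → s \ {x} ⊆ u := by
    intro u v hu hv huv hdisj htu
    have hsu : s ⊆ u ∪ interior t := by
      refine (isPreconnected_iff_subset_of_disjoint.1 hs (u ∪ interior t) (v \ {x})
        (hu.union isOpen_interior) (hv.sdiff isClosed_singleton) (fun y hy ↦ ?_) ?_).resolve_right
        fun h ↦ (h (hts (mem_of_mem_nhds ht))).2 rfl
      · by_cases hyx : y = x
        · exact Or.inl (Or.inr (hyx ▸ mem_interior_iff_mem_nhds.2 ht))
        · exact (huv ⟨hy, hyx⟩).imp Or.inl fun hyv ↦ ⟨hyv, hyx⟩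
      · refine eq_empty_of_forall_notMem fun y ⟨hys, hyu, hyv, hyx⟩ ↦ ?_
        exact hdisj.subset ⟨⟨hys, hyx⟩,
          hyu.elim id fun hyt ↦ htu ⟨interior_subset hyt, hyx⟩, hyv⟩
    exact fun y hy ↦ (hsu hy.1).elim id fun hyt ↦ htu ⟨interior_subset hyt, hy.2⟩
  refine isPreconnected_iff_subset_of_disjoint.2 fun u v hu hv huv hdisj ↦ ?_
  have htsx : t \ {x} ⊆ s \ {x} := sdiff_subset_sdiff_left hts
  refine (isPreconnected_iff_subset_of_disjoint.1 htx u v hu hv (htsx.trans huv)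
    (subset_eq_empty (inter_subset_inter_left _ htsx) hdisj)).imp (key u v hu hv huv hdisj) ?_
  rw [union_comm] at huv
  rw [inter_comm u v] at hdisj
  exact key v u hv hu huv hdisj

theorem isPreconnected_ball_sdiff_singleton {E : Type*} [NormedAddCommGroup E] [NormedSpace ℝ E]
    (h : 1 < Module.rank ℝ E) (x : E) {r : ℝ} (hr : 0 < r) : IsPreconnected (ball x r \ {x}) := by
  set e := OpenPartialHomeomorph.univBall x r
  have himage : e '' {0}ᶜ = ball x r \ {x} := by
    have he : InjOn e univ := OpenPartialHomeomorph.univBall_source x r ▸ e.injOn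
    rw [compl_eq_univ_sdiff, he.image_sdiff_subset (subset_univ _), image_singleton,
      OpenPartialHomeomorph.univBall_apply_zero, ← OpenPartialHomeomorph.univBall_source x r,
      e.image_source_eq_target, OpenPartialHomeomorph.univBall_target x hr]
  rw [← himage]
  exact (isConnected_compl_singleton_of_one_lt_rank h 0).isPreconnected.image _
    (OpenPartialHomeomorph.continuous_univBall x r).continuousOn

theorem isPreconnected_sdiff_singleton {E : Type*} [NormedAddCommGroup E] [NormedSpace ℝ E]
    (h : 1 < Module.rank ℝ E) {s : Set E} {x : E} (hs : IsPreconnected s) (hx : s ∈ 𝓝 x) :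
    IsPreconnected (s \ {x}) := by
  obtain ⟨r, hr, hrs⟩ := Metric.mem_nhds_iff.1 hx
  exact isPreconnected_sdiff_singleton_of_mem_nhds hs hrs (ball_mem_nhds x hr)
    (isPreconnected_ball_sdiff_singleton h x hr)

theorem isOpen_image_of_injOn {U O : Set ℂ} {f : ℂ → ℂ} (hU : IsOpen U)
    (hf : DifferentiableOn ℂ f U) (hinj : InjOn f U) (hOU : O ⊆ U) (hO : IsOpen O) :
    IsOpen (f '' O) := by
  rw [isOpen_iff_mem_nhds]
  rintro _ ⟨z, hz, rfl⟩
  refine (((hf.analyticAt (hU.mem_nhds (hOU hz))).eventually_constant_or_nhds_le_map_nhds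
    ).resolve_left fun hconst ↦ ?_) (image_mem_map (hO.mem_nhds hz))
  obtain ⟨w, ⟨hwf, hwO⟩, hwz⟩ := (((hconst.and (hO.mem_nhds hz)).filter_mono
    nhdsWithin_le_nhds).and (self_mem_nhdsWithin : {z}ᶜ ∈ 𝓝[≠] z)).exists
  exact hwz (hinj (hOU hwO) (hOU hz) hwf)

theorem exists_differentiableOn_invOn {V : Set ℂ} {f : ℂ → ℂ} (hV : IsOpen V)
    (hf : DifferentiableOn ℂ f V) (hinj : InjOn f V) (hf' : ∀ z ∈ V, deriv f z ≠ 0) :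
    ∃ g, DifferentiableOn ℂ g (f '' V) ∧ InvOn g f V (f '' V) := by
  have hopen : IsOpenMap (V.domRestrict f) := by
    rintro _ ⟨O, hO, rfl⟩
    rw [image_domRestrict]
    exact isOpen_image_of_injOn hV hf hinj inter_subset_right (hO.inter hV)
  set e := OpenPartialHomeomorph.ofContinuousOpenRestrict (hinj.toPartialEquiv f V)
    hf.continuousOn hopen hV
  refine ⟨e.symm, fun w hw ↦ ?_, fun z hz ↦ e.left_inv hz, fun w hw ↦ e.right_inv hw⟩
  have hsymm : e.symm w ∈ V := e.map_target hw
  exact (e.hasDerivAt_symm hw (hf' _ hsymm) (hf.differentiableAt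
    (hV.mem_nhds hsymm)).hasDerivAt).differentiableAt.differentiableWithinAt

/-- `φ` represents the domain `U ∋ ∞` of the Riemann sphere as the image of the unit disc under
the univalent map `w ↦ (φ w)⁻¹` sending `0` to `∞`. Working with the reciprocal `φ` avoids
the pole. -/
structure IsExteriorMap (φ : ℂ → ℂ) (U : Set ℂ) : Prop where
  differentiableOn : DifferentiableOn ℂ φ (ball 0 1)
  injOn : InjOn φ (ball 0 1)
  map_zero : φ 0 = 0
  image_inv : (fun w ↦ (φ w)⁻¹) '' (ball 0 1 \ {0}) = U

theorem exists_isExteriorMap {U : Set ℂ} (hU : IsOpen U) (hUc : IsPreconnected U)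
    (hUcc : IsPreconnected Uᶜ) (hUb : IsBounded Uᶜ) (hU0 : Uᶜ ∈ 𝓝 0) :
    ∃ φ, IsExteriorMap φ U := by
  set V : Set ℂ := insert 0 U⁻¹
  have h0U : (0 : ℂ) ∉ U := mem_of_mem_nhds hU0
  have hinv : ∀ s : Set ℂ, 0 ∉ s → IsPreconnected s → IsPreconnected s⁻¹ := fun s h0 hs ↦
    Set.image_inv_eq_inv (s := s) ▸ hs.image _ (continuousOn_id.inv₀ fun z hz h ↦ h0 (h ▸ hz))
  have hVcompl : Vᶜ = (Uᶜ \ {0})⁻¹ := by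
    ext z
    simp [V, and_comm]
  have hU_nhds : U⁻¹ ∈ 𝓝[≠] (0 : ℂ) := by
    rw [← inv_cobounded₀]
    exact Filter.inv_mem_inv (compl_compl U ▸ isBounded_def.1 hUb)
  have hV : IsOpen V := by
    refine isOpen_iff_mem_nhds.2 fun z hz ↦ ?_
    obtain rfl | hzU := hz
    · exact insert_mem_nhds_iff.2 hU_nhds
    · have hz0 : z ≠ 0 := fun h ↦ h0U (by simpa [h] using hzU)
      exact mem_of_superset ((continuousAt_inv₀ hz0).preimage_mem_nhds (hU.mem_nhds hzU))
        (subset_insert 0 _)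
  have hVb : IsBounded V := by
    rw [isBounded_def, hVcompl, ← inv_nhdsNE_zero]
    exact Filter.inv_mem_inv (sdiff_mem_nhdsWithin_compl hU0 _)
  have hVc : IsPreconnected V := by
    refine (hinv U h0U hUc).subset_closure (subset_insert 0 _)
      (insert_subset ?_ subset_closure)
    exact mem_closure_iff_frequently.2
      ((Eventually.frequently hU_nhds).filter_mono nhdsWithin_le_nhds)
  have hVcc : IsPreconnected Vᶜ := by
    rw [hVcompl]
    exact hinv _ (fun h ↦ h.2 rfl) (isPreconnected_sdiff_singleton (by simp) hUcc hU0)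
  obtain ⟨f, hf, hf0, hfV⟩ :=
    IsUnivalentIntoDisc.exists_image_eq_ball hV hVb hVc hVcc (mem_insert 0 _)
  obtain ⟨φ, hφ, hφf, hfφ⟩ :=
    exists_differentiableOn_invOn hV hf.differentiableOn hf.injOn hf.deriv_ne_zero
  rw [hfV] at hφ hfφ
  have hφ0 : φ 0 = 0 := by simpa only [hf0] using hφf (mem_insert 0 U⁻¹)
  refine ⟨φ, hφ, hfφ.injOn, hφ0, ?_⟩
  have himage : φ '' (ball 0 1 \ {0}) = U⁻¹ := by
    rw [hfφ.injOn.image_sdiff_subset (by simp), ← hfV, hφf.image_image, image_singleton, hφ0,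
      insert_sdiff_self_of_notMem (by simpa using h0U)]
  rw [← inv_inv U, ← himage, ← image_inv_eq_inv, image_image]

namespace IsExteriorMap

variable {φ ψ : ℂ → ℂ} {U O : Set ℂ} {w : ℂ}

theorem congr (h : IsExteriorMap φ U) (heq : EqOn ψ φ (ball 0 1)) : IsExteriorMap ψ U where
  differentiableOn := h.differentiableOn.congr heq
  injOn := h.injOn.congr heq.symm
  map_zero := (heq (mem_ball_self one_pos)).trans h.map_zero
  image_inv := by
    rw [← h.image_inv]
    exact image_congr fun w hw ↦ congrArg _ (heq hw.1)

theorem ne_zero (h : IsExteriorMap φ U) (hw : w ∈ ball 0 1 \ {0}) : φ w ≠ 0 := fun h0 ↦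
  hw.2 (h.injOn hw.1 (mem_ball_self one_pos) (h0.trans h.map_zero.symm))

theorem inv_mem (h : IsExteriorMap φ U) (hw : w ∈ ball 0 1 \ {0}) : (φ w)⁻¹ ∈ U :=
  h.image_inv.subset (mem_image_of_mem _ hw)

theorem injOn_inv (h : IsExteriorMap φ U) : InjOn (fun w ↦ (φ w)⁻¹) (ball 0 1 \ {0}) :=
  fun _ hv _ hw hvw ↦ h.injOn hv.1 hw.1 (inv_injective hvw)

theorem differentiableOn_inv (h : IsExteriorMap φ U) :
    DifferentiableOn ℂ (fun w ↦ (φ w)⁻¹) (ball 0 1 \ {0}) :=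
  (h.differentiableOn.mono sdiff_subset).inv fun _ ↦ h.ne_zero

theorem isOpen_image_inv (h : IsExteriorMap φ U) (hOU : O ⊆ ball 0 1 \ {0}) (hO : IsOpen O) :
    IsOpen ((fun w ↦ (φ w)⁻¹) '' O) :=
  isOpen_image_of_injOn (isOpen_ball.sdiff isClosed_singleton) h.differentiableOn_inv h.injOn_inv
    hOU hO

theorem isOpen (h : IsExteriorMap φ U) : IsOpen U :=
  h.image_inv ▸ h.isOpen_image_inv subset_rfl (isOpen_ball.sdiff isClosed_singleton)

theorem exists_pos_forall_le_norm (h : IsExteriorMap φ U) {r : ℝ} (hr : 0 < r) (hr1 : r ≤ 1) :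
    ∃ c > 0, ∀ w ∈ ball 0 1, r ≤ ‖w‖ → c ≤ ‖φ w‖ := by
  have hrball : ball (0 : ℂ) r ⊆ ball 0 1 := ball_subset_ball hr1
  have hopen := isOpen_image_of_injOn isOpen_ball h.differentiableOn h.injOn hrball isOpen_ball
  obtain ⟨c, hc, hcr⟩ := Metric.isOpen_iff.1 hopen 0 ⟨0, mem_ball_self hr, h.map_zero⟩
  refine ⟨c, hc, fun w hw hrw ↦ ?_⟩
  by_contra! hlt
  obtain ⟨v, hv, hvw⟩ := hcr (mem_ball_zero_iff.2 hlt)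
  rw [← h.injOn (hrball hv) hw hvw] at hrw
  exact hrw.not_gt (mem_ball_zero_iff.1 hv)

theorem norm_le_inv (h : IsExteriorMap φ U) {r : ℝ} (hr : 0 < r) (hrU : ball 0 r ⊆ Uᶜ)
    (hw : w ∈ ball 0 1) : ‖φ w‖ ≤ r⁻¹ := by
  rcases eq_or_ne w 0 with rfl | hw0
  · simpa [h.map_zero] using hr.le
  · by_contra! hlt
    refine hrU (mem_ball_zero_iff.2 ?_) (h.inv_mem ⟨hw, hw0⟩)
    rw [norm_inv]
    exact inv_lt_of_inv_lt₀ hr hlt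

end IsExteriorMap

/-- A set `s` is uniformly locally connected if any two of its points at distance less than
some `δ`, depending only on `ε`, lie in a connected subset of `s` of radius at most `ε`. -/
def IsUniformlyLocallyConnected {X : Type*} [PseudoMetricSpace X] (s : Set X) : Prop :=
  ∀ ε > 0, ∃ δ > 0, ∀ x ∈ s, ∀ y ∈ s, dist x y < δ →
    ∃ E ⊆ s, E ⊆ closedBall x ε ∧ x ∈ E ∧ y ∈ E ∧ IsPreconnected E

namespace IsUniformlyLocallyConnected

variable {X : Type*} [PseudoMetricSpace X] {s : Set X} {ε : ℝ}

theorem exists_isClosed_isPreconnected (h : IsUniformlyLocallyConnected s) (hs : IsClosed s)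
    (hε : 0 < ε) : ∃ η ∈ Ioc 0 ε, ∀ a, ∀ F ⊆ s, F ⊆ closedBall a η →
      ∃ E, IsClosed E ∧ IsPreconnected E ∧ F ⊆ E ∧ E ⊆ s ∧ E ⊆ closedBall a ε := by
  obtain ⟨δ, hδ, hδE⟩ := h (ε / 2) (half_pos hε)
  have hηδ : min (δ / 3) (ε / 2) ≤ δ / 3 := min_le_left _ _
  have hηε : min (δ / 3) (ε / 2) ≤ ε / 2 := min_le_right _ _
  refine ⟨min (δ / 3) (ε / 2), ⟨by positivity, by linarith⟩, fun a F hF hFa ↦ ?_⟩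
  obtain rfl | ⟨b, hb⟩ := F.eq_empty_or_nonempty
  · exact ⟨∅, isClosed_empty, isPreconnected_empty, subset_rfl, empty_subset _, empty_subset _⟩
  have hba : dist b a ≤ min (δ / 3) (ε / 2) := hFa hb
  have hjoin (y : F) : ∃ E ⊆ s, E ⊆ closedBall b (ε / 2) ∧ b ∈ E ∧ (y : X) ∈ E ∧
      IsPreconnected E := by
    have hya : dist (y : X) a ≤ min (δ / 3) (ε / 2) := hFa y.2
    exact hδE b (hF hb) y (hF y.2) (by linarith [dist_triangle_right b y a])
  choose E hEs hEb hbE hyE hE using hjoin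
  refine ⟨closure (⋃ y, E y), isClosed_closure,
    (isPreconnected_iUnion ⟨b, mem_iInter.2 hbE⟩ hE).closure,
    fun y hy ↦ subset_closure (mem_iUnion.2 ⟨⟨y, hy⟩, hyE _⟩),
    closure_minimal (iUnion_subset hEs) hs, ?_⟩
  exact (closure_minimal (iUnion_subset hEb) isClosed_closedBall).trans
    (closedBall_subset_closedBall' (by linarith))

theorem exists_isCompact_isPreconnected_inter [ProperSpace X] (h : IsUniformlyLocallyConnected s)
    (hs : IsClosed s) (hε : 0 < ε) : ∃ η > 0, ∀ a Γ, IsClosed Γ → Γ ⊆ closedBall a η →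
      ∃ B, IsCompact B ∧ IsPreconnected (s ∩ B) ∧ Γ ⊆ B ∧ B ⊆ closedBall a ε := by
  obtain ⟨η, ⟨hη, hηε⟩, hηE⟩ := h.exists_isClosed_isPreconnected hs hε
  refine ⟨η, hη, fun a Γ hΓcl hΓ ↦ ?_⟩
  obtain ⟨E, hEcl, hE, hΓE, hEs, hEa⟩ :=
    hηE a (s ∩ Γ) inter_subset_left (inter_subset_right.trans hΓ)
  have hB : Γ ∪ E ⊆ closedBall a ε :=
    union_subset (hΓ.trans (closedBall_subset_closedBall hηε)) hEa
  refine ⟨Γ ∪ E, (isCompact_closedBall a ε).of_isClosed_subset (hΓcl.union hEcl) hB, ?_,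
    subset_union_left, hB⟩
  rwa [inter_union_distrib_left, inter_eq_self_of_subset_right hEs, union_eq_right.2 hΓE]

end IsUniformlyLocallyConnected

namespace IsExteriorMap

variable {φ : ℂ → ℂ} {K B U : Set ℂ} {ζ : ℂ} {ε : ℝ}

/-- By Janiszewski's theorem a connection in `Bᶜ` could be replaced by one in `(K ∪ B)ᶜ`, which
would pull back to the punctured disc and join `O₁` to `O₂` there. -/
theorem inv_notMem_connectedComponentIn_compl (h : IsExteriorMap φ (fillHoles K)ᶜ)
    (hK : IsCompact K) (hB : IsCompact B) (hKB : IsPreconnected (K ∩ B)) {O₁ O₂ : Set ℂ}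
    (hO₁ : IsOpen O₁) (hO₂ : IsOpen O₂) (hO : Disjoint O₁ O₂)
    (hsep : ∀ z ∈ ball 0 1 \ {0}, z ∉ O₁ → z ∉ O₂ → (φ z)⁻¹ ∈ B) {v w : ℂ}
    (hv : v ∈ ball 0 1 \ {0}) (hvO₁ : v ∈ O₁) (hw : w ∈ ball 0 1 \ {0}) (hwO₂ : w ∈ O₂) :
    (φ w)⁻¹ ∉ connectedComponentIn Bᶜ (φ v)⁻¹ := by
  intro hwv
  have hvU := h.inv_mem hv
  have hvB : (φ v)⁻¹ ∈ Bᶜ := connectedComponentIn_nonempty_iff.1 ⟨_, hwv⟩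
  obtain ⟨q, hq⟩ := fillHoles.exists_compl_eq_connectedComponentIn hK.isBounded
  have hU : (fillHoles K)ᶜ = connectedComponentIn Kᶜ (φ v)⁻¹ :=
    hq.trans (connectedComponentIn_eq (hq.subset hvU))
  have hvK : (φ v)⁻¹ ∉ K := fun hvK ↦ hvU (fillHoles.subset_self hvK)
  have hwv' := mem_connectedComponentIn_compl_union hK hB hKB hvK hvB (hU ▸ h.inv_mem hw) hwv
  set C := connectedComponentIn (K ∪ B)ᶜ (φ v)⁻¹
  have hCU : C ⊆ (fillHoles K)ᶜ :=
    hU ▸ connectedComponentIn_mono _ (compl_subset_compl.2 subset_union_left)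
  have hopen {O : Set ℂ} (hO : IsOpen O) :
      IsOpen ((fun z ↦ (φ z)⁻¹) '' ((ball 0 1 \ {0}) ∩ O)) :=
    h.isOpen_image_inv inter_subset_left ((isOpen_ball.sdiff isClosed_singleton).inter hO)
  have hcover : C ⊆ (fun z ↦ (φ z)⁻¹) '' ((ball 0 1 \ {0}) ∩ O₁) ∪
      (fun z ↦ (φ z)⁻¹) '' ((ball 0 1 \ {0}) ∩ O₂) := by
    intro y hy
    obtain ⟨z, hz, rfl⟩ := h.image_inv.superset (hCU hy)
    rw [← image_union, ← inter_union_distrib_left]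
    refine ⟨z, ⟨hz, ?_⟩, rfl⟩
    by_contra! hzO
    exact connectedComponentIn_subset _ _ hy
      (Or.inr (hsep z hz (fun h ↦ hzO (Or.inl h)) fun h ↦ hzO (Or.inr h)))
  obtain ⟨-, -, ⟨z, hz, rfl⟩, z', hz', hzz'⟩ := isPreconnected_connectedComponentIn _ _
    (hopen hO₁) (hopen hO₂) hcover
    ⟨_, mem_connectedComponentIn fun h ↦ h.elim hvK hvB, v, ⟨hv, hvO₁⟩, rfl⟩
    ⟨_, hwv', w, ⟨hw, hwO₂⟩, rfl⟩
  exact disjoint_left.1 hO hz.2 (h.injOn_inv hz'.1 hz.1 hzz' ▸ hz'.2)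

theorem exists_forall_dist_eq_inv_mem_closedBall (h : IsExteriorMap φ U) (hU : Uᶜ ∈ 𝓝 0)
    (hζ : ‖ζ‖ = 1) (hε : 0 < ε) : ∃ r ∈ Ioo 0 (1 / 2), ∃ a, ∀ w ∈ ball 0 1, dist w ζ = r →
      (φ w)⁻¹ ∈ closedBall a ε := by
  obtain ⟨c, hc, hcφ⟩ := h.exists_pos_forall_le_norm one_half_pos one_half_lt_one.le
  obtain ⟨ρ, hρ, hρU⟩ := Metric.mem_nhds_iff.1 hU
  have hvol : MeasureTheory.volume (φ '' ball 0 1) ≠ ⊤ :=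
    ((isBounded_closedBall (x := (0 : ℂ)) (r := ρ⁻¹)).subset (image_subset_iff.2 fun w hw ↦ by
      simpa using h.norm_le_inv hρ hρU hw)).measure_lt_top.ne
  obtain ⟨r, hr, hrφ⟩ := exists_forall_dist_eq_dist_lt h.differentiableOn h.injOn hvol hζ
    (δ := ε * (c * c)) (by positivity) one_half_pos
  refine ⟨r, hr, ?_⟩
  by_cases hne : ∃ v ∈ ball 0 1, dist v ζ = r
  · obtain ⟨v, hv, hvr⟩ := hne
    have hle : ∀ w ∈ ball 0 1, dist w ζ = r → c ≤ ‖φ w‖ := fun w hw hwr ↦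
      hcφ w hw (by linarith [norm_sub_norm_le ζ w, dist_eq_norm' w ζ, hr.2])
    refine ⟨(φ v)⁻¹, fun w hw hwr ↦ ?_⟩
    have hv' := hle v hv hvr
    have hw' := hle w hw hwr
    have hφv := hc.trans_le hv'
    have hφw := hc.trans_le hw'
    rw [mem_closedBall, dist_inv_inv₀ (norm_pos_iff.1 hφw) (norm_pos_iff.1 hφv),
      div_le_iff₀ (mul_pos hφw hφv)]
    exact (hrφ w hw v hv hwr hvr).le.trans (by gcongr)
  · push Not at hne
    exact ⟨0, fun w hw hwr ↦ (hne w hw hwr).elim⟩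

theorem exists_lt_norm_inv (h : IsExteriorMap φ U) (hU : IsBounded Uᶜ) (M : ℝ) :
    ∃ w ∈ ball 0 1 \ {0}, M < ‖(φ w)⁻¹‖ := by
  by_contra! hle
  refine not_isBounded_compl_of_isBounded hU ?_
  rw [compl_compl, ← h.image_inv]
  exact (isBounded_closedBall (x := (0 : ℂ)) (r := M)).subset <| image_subset_iff.2 fun w hw ↦
    mem_closedBall_zero_iff.2 (hle w hw)

theorem exists_forall_inv_mem_closedBall (h : IsExteriorMap φ (fillHoles K)ᶜ) (hK : IsCompact K)
    (hK0 : K ∈ 𝓝 0) (hKu : IsUniformlyLocallyConnected K) (hζ : ‖ζ‖ = 1) (hε : 0 < ε) :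
    ∃ r > 0, ∃ a, ∀ w ∈ ball 0 1 ∩ ball ζ r, (φ w)⁻¹ ∈ closedBall a ε := by
  obtain ⟨η, hη, hηB⟩ := hKu.exists_isCompact_isPreconnected_inter hK.isClosed hε
  obtain ⟨r, hr, a, ha⟩ := h.exists_forall_dist_eq_inv_mem_closedBall
    (by simpa using mem_of_superset hK0 fillHoles.subset_self) hζ hη
  obtain ⟨c, hc, hcφ⟩ := h.exists_pos_forall_le_norm one_half_pos one_half_lt_one.le
  have hnorm : ∀ w ∈ closedBall ζ r, 1 / 2 ≤ ‖w‖ := fun w hw ↦ by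
    linarith [norm_sub_norm_le ζ w, dist_eq_norm' w ζ, hr.2, mem_closedBall.1 hw]
  obtain ⟨B, hB, hKB, hΓB, hBa⟩ := hηB a (closure ((fun w ↦ (φ w)⁻¹) '' (ball 0 1 ∩ sphere ζ r)))
    isClosed_closure (closure_minimal (image_subset_iff.2 fun w hw ↦ ha w hw.1 hw.2)
      isClosed_closedBall)
  obtain ⟨v, hv, hvφ⟩ := h.exists_lt_norm_inv
    (by simpa using (fillHoles.isCompact hK).isBounded) (max c⁻¹ (‖a‖ + ε))
  have hva : (φ v)⁻¹ ∉ closedBall a ε := fun hmem ↦ by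
    linarith [norm_sub_norm_le (φ v)⁻¹ a, mem_closedBall_iff_norm.1 hmem,
      (le_max_right _ _).trans_lt hvφ]
  have hvζ : v ∉ closedBall ζ r := fun hmem ↦ ((le_max_left _ _).trans_lt hvφ).not_ge
    (norm_inv (φ v) ▸ inv_anti₀ hc (hcφ v hv.1 (hnorm v hmem)))
  refine ⟨r, hr.1, a, fun w hw ↦ ?_⟩
  by_contra hwa
  have hw0 : w ≠ 0 := norm_pos_iff.1 (one_half_pos.trans_le (hnorm w (ball_subset_closedBall hw.2)))
  refine h.inv_notMem_connectedComponentIn_compl hK hB hKB isOpen_ball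
    isClosed_closedBall.isOpen_compl (disjoint_compl_right.mono_left ball_subset_closedBall)
    (fun z hz hzr hzr' ↦ hΓB (subset_closure ⟨z, ⟨hz.1, ?_⟩, rfl⟩)) ⟨hw.1, hw0⟩ hw.2 hv hvζ
    ((isPreconnected_compl_closedBall (by simp) a ε).subset_connectedComponentIn hwa
      (compl_subset_compl.2 hBa) hva)
  exact le_antisymm (not_not.1 hzr') (not_lt.1 hzr)

theorem exists_tendsto_nhdsWithin_ball (h : IsExteriorMap φ (fillHoles K)ᶜ) (hK : IsCompact K)
    (hK0 : K ∈ 𝓝 0) (hKu : IsUniformlyLocallyConnected K) (hζ : ‖ζ‖ = 1) :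
    ∃ y, Tendsto φ (𝓝[ball 0 1] ζ) (𝓝 y) := by
  have hζcl : ζ ∈ closure (ball 0 1) := by
    simpa [closure_ball (0 : ℂ) one_ne_zero] using hζ.le
  have := mem_closure_iff_nhdsWithin_neBot.1 hζcl
  have hcauchy : Cauchy (map (fun w ↦ (φ w)⁻¹) (𝓝[ball 0 1] ζ)) := by
    refine Metric.cauchy_iff.2 ⟨inferInstance, fun ε hε ↦ ?_⟩
    obtain ⟨r, hr, a, ha⟩ := h.exists_forall_inv_mem_closedBall hK hK0 hKu hζ (ε := ε / 3)
      (by positivity)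
    refine ⟨_, image_mem_map (inter_mem_nhdsWithin _ (ball_mem_nhds ζ hr)), ?_⟩
    rintro _ ⟨w, hw, rfl⟩ _ ⟨w', hw', rfl⟩
    linarith [dist_triangle_right (φ w)⁻¹ (φ w')⁻¹ a, mem_closedBall.1 (ha w hw),
      mem_closedBall.1 (ha w' hw')]
  obtain ⟨y, hy⟩ := CompleteSpace.complete hcauchy
  have hy0 : y ≠ 0 := by
    rintro rfl
    have hmem : ∀ᶠ w in 𝓝[ball 0 1] ζ, (φ w)⁻¹ ∈ (fillHoles K)ᶜ := by
      filter_upwards [self_mem_nhdsWithin, mem_nhdsWithin_of_mem_nhds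
        (isOpen_ne.mem_nhds (norm_ne_zero_iff.1 (hζ ▸ one_ne_zero)))] with w hw hw0
      exact h.inv_mem ⟨hw, hw0⟩
    have hmemK : ∀ᶠ w in 𝓝[ball 0 1] ζ, (φ w)⁻¹ ∈ K := hy hK0
    obtain ⟨w, hwU, hwK⟩ := (hmem.and hmemK).exists
    exact hwU (fillHoles.subset_self hwK)
  exact ⟨y⁻¹, by simpa using (show Tendsto (fun w ↦ (φ w)⁻¹) _ _ from hy).inv₀ hy0⟩

end IsExteriorMap

theorem exists_isExteriorMap_continuousOn_closedBall {K : Set ℂ} (hK : IsCompact K)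
    (hKc : IsPreconnected K) (hK0 : K ∈ 𝓝 0) (hKu : IsUniformlyLocallyConnected K) :
    ∃ φ, IsExteriorMap φ (fillHoles K)ᶜ ∧ ContinuousOn φ (closedBall 0 1) := by
  have hcompl : (fillHoles K)ᶜᶜ ∈ 𝓝 0 := by
    simpa using mem_of_superset hK0 fillHoles.subset_self
  obtain ⟨φ, h⟩ := exists_isExteriorMap (fillHoles.isCompact hK).isClosed.isOpen_compl
    (fillHoles.isPreconnected_compl hK.isBounded)
    (by simpa using fillHoles.isPreconnected hK hKc)
    (by simpa using (fillHoles.isCompact hK).isBounded) hcompl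
  have hφ : ∀ w ∈ ball 0 1, Tendsto φ (𝓝[ball 0 1] w) (𝓝 (φ w)) :=
    h.differentiableOn.continuousOn
  refine ⟨extendFrom (ball 0 1) φ, h.congr fun w hw ↦ extendFrom_eq (subset_closure hw) (hφ w hw),
    continuousOn_extendFrom (closure_ball (0 : ℂ) one_ne_zero).superset fun w hw ↦ ?_⟩
  rcases (mem_closedBall_zero_iff.1 hw).lt_or_eq with hw1 | hw1
  · exact ⟨φ w, hφ w (mem_ball_zero_iff.2 hw1)⟩
  · exact h.exists_tendsto_nhdsWithin_ball hK hK0 hKu hw1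

/-! ### Boundary correspondence -/

theorem eq_or_eq_of_im_mul_conj_eq_zero {a b w : ℂ} (ha : ‖a‖ = 1) (hb : ‖b‖ = 1) (hab : a ≠ b)
    (hw : ‖w‖ = 1) (h : ((w - a) * conj (b - a)).im = 0) : w = a ∨ w = b := by
  have hconj := Complex.conj_eq_iff_im.2 h
  have ha0 : a ≠ 0 := norm_ne_zero_iff.1 (ha ▸ one_ne_zero)
  have hb0 : b ≠ 0 := norm_ne_zero_iff.1 (hb ▸ one_ne_zero)
  have hw0 : w ≠ 0 := norm_ne_zero_iff.1 (hw ▸ one_ne_zero)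
  simp only [map_mul, map_sub, Complex.conj_conj] at hconj
  simp only [← Complex.inv_eq_conj ha, ← Complex.inv_eq_conj hb, ← Complex.inv_eq_conj hw] at hconj
  field_simp at hconj
  have hmul : (w - a) * (w - b) * (b - a) = 0 := by linear_combination (1 : ℂ) * hconj
  simpa [sub_eq_zero, hab.symm] using hmul

theorem exists_norm_eq_one_im_mul_conj_pos {a b : ℂ} (ha : ‖a‖ = 1) (hb : ‖b‖ = 1) (hab : a ≠ b) :
    ∃ m : ℂ, ‖m‖ = 1 ∧ 0 < ((m - a) * conj (b - a)).im := by
  set d := b - a with hd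
  have hd0 : 0 < ‖d‖ := norm_sub_pos_iff.2 hab.symm
  have hre : (a * conj d).re = -(‖d‖ ^ 2 / 2) := by
    have hsq : ‖a + d‖ ^ 2 = ‖a‖ ^ 2 + 2 * (a * conj d).re + ‖d‖ ^ 2 := by
      rw [Complex.sq_norm, Complex.normSq_add, Complex.sq_norm, Complex.sq_norm]; ring
    rw [hd, add_sub_cancel, ha, hb] at hsq
    linarith
  have him : |(a * conj d).im| < ‖d‖ := by
    have := Complex.abs_im_lt_norm.2 (hre.trans_ne (neg_ne_zero.2 (by positivity)))
    rwa [norm_mul, ha, one_mul, RCLike.norm_conj] at this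
  refine ⟨Complex.I * (d / ‖d‖), by simp [hd0.ne'], ?_⟩
  have hmul : Complex.I * (d / ‖d‖) * conj d = Complex.I * ‖d‖ := by
    rw [mul_assoc, div_mul_eq_mul_div, Complex.mul_conj', pow_two,
      mul_div_cancel_right₀ _ (by exact_mod_cast hd0.ne')]
  rw [sub_mul, hmul, Complex.sub_im, Complex.I_mul_im, Complex.ofReal_re]
  linarith [(abs_lt.1 him).2]

theorem exists_continuous_ne_zero_eq_or_eq_of_eq_zero {a b : ℂ} (ha : ‖a‖ = 1) (hb : ‖b‖ = 1)
    (hab : a ≠ b) : ∃ H : ℂ → ℝ, Continuous H ∧ H 0 ≠ 0 ∧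
      (∀ w, ‖w‖ = 1 → H w = 0 → w = a ∨ w = b) ∧
      (∃ m, ‖m‖ = 1 ∧ 0 < H m) ∧ ∃ m, ‖m‖ = 1 ∧ H m < 0 := by
  set l : ℂ → ℝ := fun w ↦ ((w - a) * conj (b - a)).im with hl
  -- The correction vanishes on the circle and moves the zero set of `l` off the origin.
  have hlH (w : ℂ) (hw : ‖w‖ = 1) : l w + (‖w‖ ^ 2 - 1) * (l 0 + 1) = l w := by simp [hw]
  refine ⟨fun w ↦ l w + (‖w‖ ^ 2 - 1) * (l 0 + 1), by simp only [hl]; fun_prop, by simp, ?_, ?_, ?_⟩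
  · exact fun w hw h ↦ eq_or_eq_of_im_mul_conj_eq_zero ha hb hab hw ((hlH w hw).symm.trans h)
  · obtain ⟨m, hm, hpos⟩ := exists_norm_eq_one_im_mul_conj_pos ha hb hab
    exact ⟨m, hm, hpos.trans_eq (hlH m hm).symm⟩
  · obtain ⟨m, hm, hpos⟩ := exists_norm_eq_one_im_mul_conj_pos hb ha hab.symm
    refine ⟨m, hm, (hlH m hm).trans_lt ?_⟩
    have hswap : (m - a) * conj (b - a) =
        -((m - b) * conj (a - b)) + Complex.normSq (b - a) := by
      rw [← Complex.mul_conj, map_sub, map_sub]; ring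
    simp only [hl, hswap, Complex.add_im, Complex.neg_im, Complex.ofReal_im]
    linarith

theorem exists_mem_sphere_inter_ne {φ : ℂ → ℂ} {c : ℂ} {A : Set ℂ}
    (hφ : DiffContOnCl ℂ φ (ball 0 1)) (h0 : φ 0 ≠ c) (hA : IsOpen A)
    (hAs : (sphere 0 1 ∩ A).Nonempty) : ∃ ζ ∈ sphere 0 1 ∩ A, φ ζ ≠ c := by
  by_contra! hAc
  obtain ⟨m, hm, hmA⟩ := hAs
  obtain ⟨F, hF⟩ := (isCompact_sphere (0 : ℂ) 1).elim_finite_subcover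
    (fun u : sphere (0 : ℂ) 1 ↦ {w : ℂ | (u : ℂ) * w ∈ A})
    (fun u ↦ hA.preimage (by fun_prop)) fun w hw ↦ by
      have hw0 : w ≠ 0 := ne_of_mem_sphere hw one_ne_zero
      refine mem_iUnion.2 ⟨⟨m * w⁻¹, by simp_all⟩, ?_⟩
      simpa [hw0] using hmA
  have hmaps (u : sphere (0 : ℂ) 1) : MapsTo (fun w ↦ (u : ℂ) * w) (ball 0 1) (ball 0 1) :=
    fun w hw ↦ by simpa using hw
  have hP (u : sphere (0 : ℂ) 1) : DiffContOnCl ℂ (fun w ↦ φ (u * w) - c) (ball 0 1) :=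
    (hφ.comp (Differentiable.diffContOnCl (by fun_prop)) (hmaps u)).sub_const c
  have hPF : DiffContOnCl ℂ (fun w ↦ ∏ u ∈ F, (φ (u * w) - c)) (ball 0 1) :=
    ⟨.fun_finsetProd fun u _ ↦ (hP u).differentiableOn,
      continuousOn_finsetProd _ fun u _ ↦ (hP u).continuousOn⟩
  have hle := Complex.norm_le_of_forall_mem_frontier_norm_le isBounded_ball hPF (C := 0)
    (fun z hz ↦ ?_) (subset_closure (mem_ball_self one_pos))
  · simp only [mul_zero, Finset.prod_const, norm_pow] at hle
    exact (pow_pos (norm_sub_pos_iff.2 h0) _).not_ge hle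
  · rw [frontier_ball _ one_ne_zero] at hz
    obtain ⟨u, huF, huA⟩ := mem_iUnion₂.1 (hF hz)
    rw [norm_le_zero_iff]
    exact Finset.prod_eq_zero huF (sub_eq_zero.2 (hAc _ ⟨by simpa using hz, huA⟩))

theorem notMem_image_of_isOpen_image_of_injOn {X Y : Type*} [TopologicalSpace X] [T2Space X]
    [TopologicalSpace Y] {f : X → Y} {s : Set X} {x : X} (hs : IsOpen s)
    (hf : ∀ O ⊆ s, IsOpen O → IsOpen (f '' O)) (hinj : InjOn f s) (hx : x ∈ closure s \ s)
    (hfx : ContinuousWithinAt f s x) : f x ∉ f '' s := by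
  rintro ⟨w, hw, hwx⟩
  obtain ⟨O, O', hO, hO', hwO, hxO', hdisj⟩ := t2_separation (ne_of_mem_of_not_mem hw hx.2)
  have := mem_closure_iff_nhdsWithin_neBot.1 hx.1
  have hmem : ∀ᶠ v in 𝓝[s] x, f v ∈ f '' (O ∩ s) :=
    hfx ((hf _ inter_subset_right (hO.inter hs)).mem_nhds ⟨w, ⟨hwO, hw⟩, hwx⟩)
  obtain ⟨v, ⟨v', ⟨hv'O, hv's⟩, hv'v⟩, hvs, hvO'⟩ :=
    (hmem.and (inter_mem_nhdsWithin s (hO'.mem_nhds hxO'))).exists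
  exact disjoint_left.1 hdisj hv'O (hinj hv's hvs hv'v ▸ hvO')

namespace IsExteriorMap

variable {φ : ℂ → ℂ} {K C U S : Set ℂ} {w x : ℂ}

theorem apply_notMem_image_ball (h : IsExteriorMap φ U) (hφ : ContinuousOn φ (closedBall 0 1))
    (hw : w ∈ sphere 0 1) : φ w ∉ φ '' ball 0 1 :=
  notMem_image_of_isOpen_image_of_injOn isOpen_ball
    (fun _ hO ↦ isOpen_image_of_injOn isOpen_ball h.differentiableOn h.injOn hO) h.injOn
    ⟨(closure_ball (0 : ℂ) one_ne_zero).superset (sphere_subset_closedBall hw),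
      fun hw' ↦ sphere_disjoint_ball.le_bot ⟨hw, hw'⟩⟩
    ((hφ w (sphere_subset_closedBall hw)).mono ball_subset_closedBall)

theorem ne_zero_of_mem_closedBall (h : IsExteriorMap φ U) (hφ : ContinuousOn φ (closedBall 0 1))
    (hw : w ∈ closedBall 0 1 \ {0}) : φ w ≠ 0 := by
  rcases (ball_union_sphere (x := (0 : ℂ)) (ε := 1)).superset hw.1 with hw1 | hw1
  · exact h.ne_zero ⟨hw1, hw.2⟩
  · exact fun hw0 ↦ h.apply_notMem_image_ball hφ hw1
      ⟨0, mem_ball_self one_pos, h.map_zero.trans hw0.symm⟩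

theorem continuousOn_inv (h : IsExteriorMap φ U) (hφ : ContinuousOn φ (closedBall 0 1)) :
    ContinuousOn (fun w ↦ (φ w)⁻¹) (closedBall 0 1 \ {0}) :=
  (hφ.mono sdiff_subset).inv₀ fun _ hw ↦ h.ne_zero_of_mem_closedBall hφ hw

theorem inv_notMem (h : IsExteriorMap φ U) (hφ : ContinuousOn φ (closedBall 0 1))
    (hw : w ∈ sphere 0 1) : (φ w)⁻¹ ∉ U := by
  rw [← h.image_inv]
  rintro ⟨v, hv, hvw⟩
  exact h.apply_notMem_image_ball hφ hw ⟨v, hv.1, inv_injective hvw⟩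

theorem inv_mem_frontier (h : IsExteriorMap φ U) (hφ : ContinuousOn φ (closedBall 0 1))
    (hw : w ∈ sphere 0 1) : (φ w)⁻¹ ∈ frontier U := by
  have hw' : w ∈ closedBall 0 1 \ {0} :=
    ⟨sphere_subset_closedBall hw, ne_of_mem_sphere hw one_ne_zero⟩
  have hcl : w ∈ closure (ball 0 1 \ {0}) := by
    rw [sdiff_eq, inter_comm]
    exact isOpen_compl_singleton.inter_closure
      ⟨hw'.2, (closure_ball (0 : ℂ) one_ne_zero).superset hw'.1⟩
  rw [h.isOpen.frontier_eq]
  exact ⟨((h.continuousOn_inv hφ w hw').mono (sdiff_subset_sdiff_left ball_subset_closedBall)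
    ).mem_closure hcl fun _ ↦ h.inv_mem, h.inv_notMem hφ hw⟩

theorem image_inv_sphere (h : IsExteriorMap φ U) (hφ : ContinuousOn φ (closedBall 0 1))
    (hU : Uᶜ ∈ 𝓝 0) : (fun w ↦ (φ w)⁻¹) '' sphere 0 1 = frontier U := by
  refine (image_subset_iff.2 fun w hw ↦ h.inv_mem_frontier hφ hw).antisymm
    fun y (hy : y ∈ frontier U) ↦ ?_
  rw [h.isOpen.frontier_eq] at hy
  have hy0 : y ≠ 0 := by
    rintro rfl
    rw [← mem_interior_iff_mem_nhds, interior_compl] at hU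
    exact hU hy.1
  have hycl : y⁻¹ ∈ φ '' closedBall 0 1 := by
    rw [← ((isCompact_closedBall (0 : ℂ) 1).image_of_continuousOn hφ).isClosed.closure_eq]
    refine (continuousAt_inv₀ hy0).continuousWithinAt.mem_closure hy.1 fun z hz ↦ ?_
    obtain ⟨w, hw, rfl⟩ := h.image_inv.superset hz
    exact ⟨w, ball_subset_closedBall hw.1, (inv_inv _).symm⟩
  obtain ⟨w, hw, hwy⟩ := hycl
  rcases (ball_union_sphere (x := (0 : ℂ)) (ε := 1)).superset hw with hw1 | hw1
  · refine (hy.2 (inv_inv y ▸ hwy ▸ h.inv_mem ⟨hw1, ?_⟩)).elim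
    rintro rfl
    exact inv_ne_zero hy0 (hwy.symm.trans h.map_zero)
  · exact ⟨w, hw1, inv_eq_iff_eq_inv.2 hwy⟩

theorem exists_mem_connectedComponentIn_compl (h : IsExteriorMap φ (fillHoles K)ᶜ)
    (hφ : ContinuousOn φ (closedBall 0 1)) (hK : IsCompact K) (hC : IsClosed C)
    (hKC : K ∩ C ⊆ {x}) (hx0 : x ≠ 0) (hS : IsOpen S) (hSs : (sphere 0 1 ∩ S).Nonempty) :
    ∃ w ∈ ball 0 1 \ {0}, w ∈ S ∧ ∃ p ∈ K \ {x}, p ∈ connectedComponentIn Cᶜ (φ w)⁻¹ := by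
  have hφ' : DiffContOnCl ℂ φ (ball 0 1) :=
    ⟨h.differentiableOn, (closure_ball (0 : ℂ) one_ne_zero).symm ▸ hφ⟩
  obtain ⟨y, ⟨hy, hyS⟩, hyx⟩ := exists_mem_sphere_inter_ne hφ' (c := x⁻¹)
    (h.map_zero.trans_ne (inv_ne_zero hx0).symm) hS hSs
  have hyK : (φ y)⁻¹ ∈ K := fillHoles.frontier_subset hK
    (frontier_compl (fillHoles K) ▸ h.inv_mem_frontier hφ hy)
  have hyx' : (φ y)⁻¹ ≠ x := fun he ↦ hyx (inv_eq_iff_eq_inv.1 he)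
  have hyC : (φ y)⁻¹ ∈ Cᶜ := fun hyC ↦ hyx' (hKC ⟨hyK, hyC⟩)
  have hy0 : y ≠ 0 := ne_of_mem_sphere hy one_ne_zero
  have hcl : y ∈ closure (ball 0 1) :=
    (closure_ball (0 : ℂ) one_ne_zero).superset (sphere_subset_closedBall hy)
  have := mem_closure_iff_nhdsWithin_neBot.1 hcl
  have htendsto : Tendsto (fun w ↦ (φ w)⁻¹) (𝓝[ball 0 1] y) (𝓝 (φ y)⁻¹) :=
    (((hφ y (sphere_subset_closedBall hy)).mono ball_subset_closedBall).tendsto).inv₀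
      (h.ne_zero_of_mem_closedBall hφ ⟨sphere_subset_closedBall hy, hy0⟩)
  have hcomp : ∀ᶠ w in 𝓝[ball 0 1] y, (φ w)⁻¹ ∈ connectedComponentIn Cᶜ (φ y)⁻¹ :=
    htendsto (hC.isOpen_compl.connectedComponentIn.mem_nhds (mem_connectedComponentIn hyC))
  obtain ⟨w, hwy, hw, hwS, hw0⟩ := (hcomp.and (inter_mem_nhdsWithin _
    (inter_mem (hS.mem_nhds hyS) (isOpen_ne.mem_nhds hy0)))).exists
  exact ⟨w, ⟨hw, hw0⟩, hwS, _, ⟨hyK, hyx'⟩, connectedComponentIn_eq hwy ▸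
    mem_connectedComponentIn hyC⟩

theorem injOn_sphere (h : IsExteriorMap φ (fillHoles K)ᶜ) (hφ : ContinuousOn φ (closedBall 0 1))
    (hK : IsCompact K) (hcut : ∀ x ∈ frontier (fillHoles K), IsPreconnected (K \ {x})) :
    InjOn φ (sphere 0 1) := by
  intro a ha b hb hab
  by_contra hne
  obtain ⟨H, hH, hH0, hHab, ⟨m₁, hm₁, hHm₁⟩, m₂, hm₂, hHm₂⟩ :=
    exists_continuous_ne_zero_eq_or_eq_of_eq_zero (mem_sphere_zero_iff_norm.1 ha)
      (mem_sphere_zero_iff_norm.1 hb) hne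
  set T := closedBall (0 : ℂ) 1 ∩ H ⁻¹' {0}
  have hT : T ⊆ closedBall 0 1 \ {0} := fun w hw ↦ ⟨hw.1, by rintro rfl; exact hH0 hw.2⟩
  set C := (fun w ↦ (φ w)⁻¹) '' T
  have hC : IsCompact C := ((isCompact_closedBall 0 1).inter_right
    (isClosed_singleton.preimage hH)).image_of_continuousOn ((h.continuousOn_inv hφ).mono hT)
  have hKC : K ∩ C ⊆ {(φ a)⁻¹} := by
    rintro _ ⟨hwK, w, hw, rfl⟩
    rcases (ball_union_sphere (x := (0 : ℂ)) (ε := 1)).superset hw.1 with hw1 | hw1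
    · exact (h.inv_mem ⟨hw1, (hT hw).2⟩ (fillHoles.subset_self hwK)).elim
    · rcases hHab w (mem_sphere_zero_iff_norm.1 hw1) hw.2 with rfl | rfl
      · rfl
      · exact congrArg Inv.inv hab.symm
  have ha0 : (φ a)⁻¹ ≠ 0 := inv_ne_zero
    (h.ne_zero_of_mem_closedBall hφ ⟨sphere_subset_closedBall ha, ne_of_mem_sphere ha one_ne_zero⟩)
  have hKa : K \ {(φ a)⁻¹} ⊆ Cᶜ := fun z hz hzC ↦ hz.2 (hKC ⟨hz.1, hzC⟩)
  have hKa' : IsPreconnected (K \ {(φ a)⁻¹}) :=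
    hcut _ (frontier_compl (fillHoles K) ▸ h.inv_mem_frontier hφ ha)
  have hpos : IsOpen {w | 0 < H w} := isOpen_lt continuous_const hH
  have hneg : IsOpen {w | H w < 0} := isOpen_lt hH continuous_const
  obtain ⟨w₁, hw₁, hHw₁, p₁, hp₁, hpw₁⟩ := h.exists_mem_connectedComponentIn_compl hφ hK
    hC.isClosed hKC ha0 hpos ⟨m₁, mem_sphere_zero_iff_norm.2 hm₁, hHm₁⟩
  obtain ⟨w₂, hw₂, hHw₂, p₂, hp₂, hpw₂⟩ := h.exists_mem_connectedComponentIn_compl hφ hK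
    hC.isClosed hKC ha0 hneg ⟨m₂, mem_sphere_zero_iff_norm.2 hm₂, hHm₂⟩
  have hp : p₂ ∈ connectedComponentIn Cᶜ p₁ := hKa'.subset_connectedComponentIn hp₁ hKa hp₂
  refine h.inv_notMem_connectedComponentIn_compl hK hC
    (subsingleton_singleton.anti hKC).isPreconnected hpos hneg
    (disjoint_left.2 fun z (hz : 0 < H z) hz' ↦ hz.asymm hz')
    (fun z hz hz₁ hz₂ ↦ ⟨z, ⟨ball_subset_closedBall hz.1, ?_⟩, rfl⟩) hw₁ hHw₁ hw₂ hHw₂ ?_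
  · exact le_antisymm (not_lt.1 hz₁) (not_lt.1 hz₂)
  · rw [connectedComponentIn_eq hpw₁, connectedComponentIn_eq hp, ← connectedComponentIn_eq hpw₂]
    exact mem_connectedComponentIn (connectedComponentIn_nonempty_iff.1 ⟨_, hpw₂⟩)

end IsExteriorMap

theorem isJordanCurve_image_sphere {f : ℂ → ℂ} (hf : ContinuousOn f (sphere 0 1))
    (hinj : InjOn f (sphere 0 1)) : IsJordanCurve (f '' sphere 0 1) := by
  have : CompactSpace (sphere (0 : ℂ) 1) := isCompact_iff_compactSpace.1 (isCompact_sphere _ _)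
  exact ⟨Continuous.homeoOfEquivCompactToT2 (f := hinj.bijOn_image.equiv)
    (hf.mapsToRestrict (mapsTo_image f _))⟩

theorem isJordanCurve_frontier_fillHoles_of_mem_nhds_zero {K : Set ℂ} (hK : IsCompact K)
    (hKc : IsPreconnected K) (hK0 : K ∈ 𝓝 0) (hKu : IsUniformlyLocallyConnected K)
    (hcut : ∀ x ∈ frontier (fillHoles K), IsPreconnected (K \ {x})) :
    IsJordanCurve (frontier (fillHoles K)) := by
  obtain ⟨φ, h, hφ⟩ := exists_isExteriorMap_continuousOn_closedBall hK hKc hK0 hKu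
  rw [← frontier_compl, ← h.image_inv_sphere hφ
    (by simpa using mem_of_superset hK0 fillHoles.subset_self)]
  exact isJordanCurve_image_sphere ((h.continuousOn_inv hφ).mono fun z hz ↦
    ⟨sphere_subset_closedBall hz, ne_of_mem_sphere hz one_ne_zero⟩)
    fun z hz w hw hzw ↦ h.injOn_sphere hφ hK hcut hz hw (inv_injective hzw)

namespace fillHoles

theorem image_isometryEquiv (e : ℂ ≃ᵢ ℂ) (K : Set ℂ) :
    fillHoles (e '' K) = e '' fillHoles K := by
  rw [← compl_inj_iff, ← image_compl_eq e.bijective]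
  ext w
  obtain ⟨z, rfl⟩ := e.surjective w
  rw [e.injective.mem_set_image, mem_compl_iff, mem_compl_iff, e.injective.mem_set_image]
  refine and_congr_right fun hz ↦ not_congr ?_
  have hcomp : connectedComponentIn (e '' K)ᶜ (e z) = e '' connectedComponentIn Kᶜ z := by
    rw [← image_compl_eq e.bijective]
    exact (e.toHomeomorph.image_connectedComponentIn hz).symm
  rw [hcomp]
  exact ⟨fun h ↦ (e.isometry.antilipschitz.isBounded_preimage h).subset (subset_preimage_image _ _),
    e.isometry.lipschitz.isBounded_image⟩

end fillHoles

theorem IsUniformlyLocallyConnected.image_isometry {X Y : Type*} [PseudoMetricSpace X]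
    [PseudoMetricSpace Y] {s : Set X} (hs : IsUniformlyLocallyConnected s) {f : X → Y}
    (hf : Isometry f) : IsUniformlyLocallyConnected (f '' s) := by
  intro ε hε
  obtain ⟨δ, hδ, h⟩ := hs ε hε
  refine ⟨δ, hδ, ?_⟩
  rintro _ ⟨x, hx, rfl⟩ _ ⟨y, hy, rfl⟩ hxy
  obtain ⟨E, hEs, hEx, hxE, hyE, hE⟩ := h x hx y hy (hf.dist_eq x y ▸ hxy)
  exact ⟨f '' E, Set.image_mono hEs,
    (Set.image_mono hEx).trans (hf.mapsTo_closedBall x ε).image_subset,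
    mem_image_of_mem f hxE, mem_image_of_mem f hyE, hE.image f hf.continuous.continuousOn⟩

theorem isJordanCurve_frontier_fillHoles {K : Set ℂ} (hK : IsCompact K) (hKc : IsPreconnected K)
    (hKi : (interior K).Nonempty) (hKu : IsUniformlyLocallyConnected K)
    (hcut : ∀ x ∈ frontier (fillHoles K), IsPreconnected (K \ {x})) :
    IsJordanCurve (frontier (fillHoles K)) := by
  obtain ⟨p, hp⟩ := hKi
  set e : ℂ ≃ᵢ ℂ := IsometryEquiv.subRight p
  have hfrontier : frontier (fillHoles (e '' K)) = e '' frontier (fillHoles K) := by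
    rw [fillHoles.image_isometryEquiv]
    exact (e.toHomeomorph.image_frontier _).symm
  have he0 : e '' K ∈ 𝓝 0 := by
    have hmem := e.toHomeomorph.isOpenMap.image_mem_nhds (mem_interior_iff_mem_nhds.1 hp)
    rwa [show e.toHomeomorph p = 0 from sub_self p] at hmem
  have hJ : IsJordanCurve (frontier (fillHoles (e '' K))) := by
    refine isJordanCurve_frontier_fillHoles_of_mem_nhds_zero (hK.image e.continuous)
      (hKc.image e e.continuous.continuousOn) he0 (hKu.image_isometry e.isometry) ?_
    rw [hfrontier]
    rintro _ ⟨x, hx, rfl⟩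
    rw [← image_singleton, ← image_sdiff e.injective]
    exact (hcut x hx).image e e.continuous.continuousOn
  rw [hfrontier] at hJ
  exact hJ.map fun g ↦ g.trans (e.toHomeomorph.image _).symm

/-! ### Local connectedness of unions of Jordan domains -/

namespace IsUniformlyLocallyConnected

variable {X : Type*} [PseudoMetricSpace X] {s : Set X}

theorem eventually (h : IsUniformlyLocallyConnected s) (hs : IsClosed s) (c : X) {ε : ℝ}
    (hε : 0 < ε) : ∀ᶠ q in 𝓝 c, q ∈ s →
      ∃ E ⊆ s, E ⊆ closedBall c ε ∧ c ∈ E ∧ q ∈ E ∧ IsPreconnected E := by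
  by_cases hc : c ∈ s
  · obtain ⟨δ, hδ, hδE⟩ := h ε hε
    filter_upwards [ball_mem_nhds c hδ] with q hqc hqs
    exact hδE c hc q hqs (dist_comm q c ▸ hqc)
  · filter_upwards [hs.isOpen_compl.mem_nhds hc] with q hq hqs using (hq hqs).elim

theorem of_isCompact (hs : IsCompact s) (h : ∀ c ∈ s, ∀ ε > 0, ∀ᶠ q in 𝓝 c, q ∈ s →
    ∃ E ⊆ s, E ⊆ closedBall c ε ∧ c ∈ E ∧ q ∈ E ∧ IsPreconnected E) :
    IsUniformlyLocallyConnected s := by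
  intro ε hε
  let U (c : X) : Set X := {q | q ∈ s →
    ∃ E ⊆ s, E ⊆ closedBall c (ε / 2) ∧ c ∈ E ∧ q ∈ E ∧ IsPreconnected E}
  have hU : ∀ c ∈ s, U c ∈ 𝓝 c := fun c hc ↦ h c hc (ε / 2) (half_pos hε)
  obtain ⟨δ, hδ, hδU⟩ := lebesgue_number_lemma_of_metric (c := fun c : s ↦ interior (U c)) hs
    (fun _ ↦ isOpen_interior)
    fun c hc ↦ mem_iUnion.2 ⟨⟨c, hc⟩, mem_interior_iff_mem_nhds.2 (hU c hc)⟩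
  refine ⟨δ, hδ, fun x hx y hy hxy ↦ ?_⟩
  obtain ⟨c, hc⟩ := hδU x hx
  obtain ⟨E, hEs, hEc, hcE, hxE, hE⟩ := interior_subset (hc (mem_ball_self hδ)) hx
  obtain ⟨F, hFs, hFc, hcF, hyF, hF⟩ := interior_subset (hc (mem_ball'.2 hxy)) hy
  refine ⟨E ∪ F, union_subset hEs hFs, ?_, Or.inl hxE, Or.inr hyF, .union (c : X) hcE hcF hE hF⟩
  exact (union_subset hEc hFc).trans
    (closedBall_subset_closedBall' (by linarith [mem_closedBall'.1 (hEc hxE)]))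

theorem of_locallyConnectedSpace (hs : IsCompact s) [LocallyConnectedSpace s] :
    IsUniformlyLocallyConnected s := by
  refine of_isCompact hs fun c hc ε hε ↦ ?_
  lift c to s using hc
  obtain ⟨V, ⟨hV, hcV, hVc⟩, hVε⟩ :=
    (LocallyConnectedSpace.open_connected_basis c).mem_iff.1 (closedBall_mem_nhds c hε)
  have hVnhds := mem_nhdsWithin_iff_eventually.1
    (mem_nhds_subtype_iff_nhdsWithin.1 (hV.mem_nhds hcV))
  filter_upwards [hVnhds] with q hq hqs
  exact ⟨Subtype.val '' V, by simp, by rintro _ ⟨y, hy, rfl⟩; exact hVε hy,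
    ⟨_, hcV, rfl⟩, hq hqs, hVc.isPreconnected.image _ continuous_subtype_val.continuousOn⟩

end IsUniformlyLocallyConnected

theorem IsJordanCurve.isUniformlyLocallyConnected {C : Set ℂ} (hC : IsJordanCurve C) :
    IsUniformlyLocallyConnected C := by
  obtain ⟨e⟩ := hC
  have : Fact (Module.finrank ℝ ℂ = 1 + 1) := ⟨Complex.finrank_real_complex⟩
  have : LocallyConnectedSpace (sphere (0 : ℂ) 1) :=
    ChartedSpace.locallyConnectedSpace (EuclideanSpace ℝ (Fin 1)) _
  have : LocallyConnectedSpace C := e.symm.locallyConnectedSpace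
  have : CompactSpace (sphere (0 : ℂ) 1) := isCompact_iff_compactSpace.1 (isCompact_sphere _ _)
  exact .of_locallyConnectedSpace (isCompact_iff_compactSpace.2 e.compactSpace)

theorem isPreconnected_inter_closure_union {X : Type*} [TopologicalSpace X] {s t E : Set X}
    (hs : IsPreconnected s) (hE : IsPreconnected E) (hst : (s ∩ frontier t).Nonempty)
    (hstE : s ∩ frontier t ⊆ E) : IsPreconnected (s ∩ closure t ∪ E) := by
  have key : ∀ u v, IsOpen u → IsOpen v → s ∩ closure t ∪ E ⊆ u ∪ v →
      (s ∩ closure t ∪ E) ∩ (u ∩ v) = ∅ → E ⊆ u → s ∩ closure t ∪ E ⊆ u := by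
    intro u v hu hv huv hdisj hEu
    have hsub : s ⊆ (u ∪ (closure t)ᶜ) ∪ (v ∩ interior t) := fun z hz ↦ by
      by_cases hzt : z ∈ closure t
      · by_cases hzi : z ∈ interior t
        · exact (huv (Or.inl ⟨hz, hzt⟩)).imp Or.inl fun hzv ↦ ⟨hzv, hzi⟩
        · exact Or.inl (Or.inl (hEu (hstE ⟨hz, hzt, hzi⟩)))
      · exact Or.inl (Or.inr hzt)
    have hsu : s ⊆ u ∪ (closure t)ᶜ := by
      refine (isPreconnected_iff_subset_of_disjoint.1 hs _ _
        (hu.union isClosed_closure.isOpen_compl)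
        (hv.inter isOpen_interior) hsub ?_).resolve_right fun h ↦ ?_
      · refine eq_empty_of_forall_notMem fun z ⟨hzs, hzu, hzv, hzi⟩ ↦ ?_
        have hzt := interior_subset_closure hzi
        exact hdisj.subset ⟨Or.inl ⟨hzs, hzt⟩, hzu.resolve_right fun h ↦ h hzt, hzv⟩
      · obtain ⟨z, hzs, hzt⟩ := hst
        exact hzt.2 (h hzs).2
    exact union_subset (fun z hz ↦ (hsu hz.1).resolve_right fun h ↦ h hz.2) hEu
  refine isPreconnected_iff_subset_of_disjoint.2 fun u v hu hv huv hdisj ↦ ?_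
  refine (isPreconnected_iff_subset_of_disjoint.1 hE u v hu hv (subset_union_right.trans huv)
    (subset_eq_empty (inter_subset_inter_left _ subset_union_right) hdisj)).imp
      (key u v hu hv huv hdisj) ?_
  rw [union_comm u] at huv
  rw [inter_comm u] at hdisj
  exact key v u hv hu huv hdisj

theorem subset_closure_of_isPreconnected_of_disjoint_frontier {X : Type*} [TopologicalSpace X]
    {s t : Set X} (hs : IsPreconnected s) (hst : (s ∩ closure t).Nonempty)
    (hdisj : Disjoint s (frontier t)) : s ⊆ closure t := by
  have hcover : s ⊆ interior t ∪ (closure t)ᶜ := fun z hz ↦ by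
    by_cases hzt : z ∈ closure t
    · exact Or.inl (of_not_not fun hzi ↦ hdisj.notMem_of_mem_left hz ⟨hzt, hzi⟩)
    · exact Or.inr hzt
  have hinter : s ∩ (interior t ∩ (closure t)ᶜ) = ∅ := by
    rw [(disjoint_compl_right_iff_subset.2 interior_subset_closure).inter_eq, inter_empty]
  refine ((isPreconnected_iff_subset_of_disjoint.1 hs _ _ isOpen_interior
    isClosed_closure.isOpen_compl hcover hinter).resolve_right fun h ↦ ?_).trans
      interior_subset_closure
  obtain ⟨z, hzs, hzt⟩ := hst
  exact h hzs hzt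

theorem IsUniformlyLocallyConnected.closure_of_frontier {E : Type*} [SeminormedAddCommGroup E]
    [NormedSpace ℝ E] {s : Set E} (h : IsUniformlyLocallyConnected (frontier s)) :
    IsUniformlyLocallyConnected (closure s) := by
  intro ε hε
  obtain ⟨η, ⟨hη, hηε⟩, hηF⟩ := h.exists_isClosed_isPreconnected isClosed_frontier hε
  refine ⟨η, hη, fun x hx y hy hxy ↦ ?_⟩
  have hseg : segment ℝ x y ⊆ closedBall x η :=
    (segment_subset_closedBall_left x y).trans (closedBall_subset_closedBall hxy.le)
  have hsegc : IsPreconnected (segment ℝ x y) := (convex_segment x y).isPreconnected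
  have hxs := left_mem_segment ℝ x y
  have hys := right_mem_segment ℝ x y
  have hsegε := hseg.trans (closedBall_subset_closedBall hηε)
  rcases (segment ℝ x y ∩ frontier s).eq_empty_or_nonempty with hempty | hne
  · exact ⟨segment ℝ x y, subset_closure_of_isPreconnected_of_disjoint_frontier hsegc
      ⟨x, hxs, hx⟩ (disjoint_iff_inter_eq_empty.2 hempty), hsegε, hxs, hys, hsegc⟩
  · obtain ⟨F, -, hF, hsegF, hFs, hFx⟩ := hηF x _ inter_subset_right (inter_subset_left.trans hseg)
    exact ⟨segment ℝ x y ∩ closure s ∪ F,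
      union_subset inter_subset_right (hFs.trans frontier_subset_closure),
      union_subset (inter_subset_left.trans hsegε) hFx, Or.inl ⟨hxs, hx⟩, Or.inl ⟨hys, hy⟩,
      isPreconnected_inter_closure_union hsegc hF hne hsegF⟩

section SmallSets

variable {X ι : Type*} [PseudoMetricSpace X] {W : ι → Set X} {i₀ : ι}

theorem eventually_forall_mem_closure_dist_lt {l : Filter ι} (hb : ∀ i, IsBounded (W i))
    (hdiam : Tendsto (fun i ↦ diam (W i)) l (𝓝 0)) {η : ℝ} (hη : 0 < η) :
    ∀ᶠ i in l, ∀ p ∈ closure (W i), ∀ q ∈ closure (W i), dist p q < η := by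
  filter_upwards [hdiam.eventually_lt_const hη] with i hi p hp q hq
  exact (dist_le_diam_of_mem (hb i).closure hp hq).trans_lt (diam_closure (W i) ▸ hi)

theorem isBounded_iUnion_of_tendsto_diam (hb : ∀ i, IsBounded (W i))
    (hdiam : Tendsto (fun i ↦ diam (W i)) cofinite (𝓝 0))
    (hmeet : ∀ i, (W i₀ ∩ W i).Nonempty) : IsBounded (⋃ i, W i) := by
  have htail := eventually_forall_mem_closure_dist_lt hb hdiam one_pos
  refine (((isBounded_biUnion (eventually_cofinite.1 htail)).2 fun i _ ↦ hb i).union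
    ((hb i₀).thickening (δ := 1))).subset (iUnion_subset fun i z hz ↦ ?_)
  by_cases hi : ∀ p ∈ closure (W i), ∀ q ∈ closure (W i), dist p q < 1
  · obtain ⟨p, hp₀, hp⟩ := hmeet i
    exact Or.inr (mem_thickening_iff.2 ⟨p, hp₀, hi z (subset_closure hz) p (subset_closure hp)⟩)
  · exact Or.inl (mem_biUnion hi hz)

theorem closure_iUnion_of_tendsto_diam (hb : ∀ i, IsBounded (W i))
    (hdiam : Tendsto (fun i ↦ diam (W i)) cofinite (𝓝 0))
    (hmeet : ∀ i, (W i₀ ∩ W i).Nonempty) : closure (⋃ i, W i) = ⋃ i, closure (W i) := by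
  refine subset_antisymm (fun c hc ↦ ?_) (iUnion_subset fun i ↦ closure_mono (subset_iUnion W i))
  by_contra hcW
  simp only [mem_iUnion, not_exists] at hcW
  obtain ⟨d, hd, hdW⟩ : ∃ d > 0, ∀ p ∈ W i₀, d ≤ dist c p := by
    simpa [Metric.mem_closure_iff] using hcW i₀
  have htail := eventually_forall_mem_closure_dist_lt hb hdiam (half_pos hd)
  have hfin : ∀ᶠ z in 𝓝 c, ∀ i ∈ {i | ¬∀ p ∈ closure (W i), ∀ q ∈ closure (W i), dist p q < d / 2},
      z ∉ closure (W i) :=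
    (eventually_all_finite (eventually_cofinite.1 htail)).2
      fun i _ ↦ isClosed_closure.isOpen_compl.mem_nhds (hcW i)
  have hnot : ∀ᶠ z in 𝓝 c, z ∉ ⋃ i, W i := by
    filter_upwards [hfin, ball_mem_nhds c (half_pos hd)] with z hz hzc hzW
    obtain ⟨i, hi⟩ := mem_iUnion.1 hzW
    obtain ⟨p, hp₀, hp⟩ := hmeet i
    have hzp := of_not_not (fun h ↦ hz i h (subset_closure hi)) z (subset_closure hi) p
      (subset_closure hp)
    linarith [hdW p hp₀, dist_triangle_left c p z, mem_ball.1 hzc]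
  exact (mem_closure_iff_frequently.1 hc) hnot

theorem IsUniformlyLocallyConnected.closure_iUnion (hb : ∀ i, IsBounded (W i))
    (hdiam : Tendsto (fun i ↦ diam (W i)) cofinite (𝓝 0)) (hmeet : ∀ i, (W i₀ ∩ W i).Nonempty)
    (hpre : ∀ i, IsPreconnected (W i)) (hcompact : IsCompact (closure (⋃ i, W i)))
    (hulc : ∀ i, IsUniformlyLocallyConnected (closure (W i))) :
    IsUniformlyLocallyConnected (closure (⋃ i, W i)) := by
  have hsub : ∀ i, closure (W i) ⊆ closure (⋃ i, W i) := fun i ↦ closure_mono (subset_iUnion W i)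
  refine of_isCompact hcompact fun c _ ε hε ↦ ?_
  have hpiece : ∀ i, ∀ᶠ q in 𝓝 c, q ∈ closure (W i) → ∃ E ⊆ closure (⋃ i, W i),
      E ⊆ closedBall c ε ∧ c ∈ E ∧ q ∈ E ∧ IsPreconnected E := fun i ↦ by
    filter_upwards [(hulc i).eventually isClosed_closure c hε] with q hq hqW
    obtain ⟨E, hEW, hE⟩ := hq hqW
    exact ⟨E, hEW.trans (hsub i), hE⟩
  obtain ⟨ρ, hρ, hρW⟩ := Metric.eventually_nhds_iff_ball.1 (hpiece i₀)
  have hη : 0 < min (ρ / 2) (ε / 2) := lt_min (half_pos hρ) (half_pos hε)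
  have htail := eventually_forall_mem_closure_dist_lt hb hdiam hη
  filter_upwards [(eventually_all_finite (eventually_cofinite.1 htail)).2 fun i _ ↦ hpiece i,
    ball_mem_nhds c hη] with q hq hqc hqW
  rw [closure_iUnion_of_tendsto_diam hb hdiam hmeet] at hqW
  obtain ⟨i, hi⟩ := mem_iUnion.1 hqW
  by_cases hsmall : ∀ p ∈ closure (W i), ∀ q ∈ closure (W i), dist p q < min (ρ / 2) (ε / 2)
  · obtain ⟨p, hp₀, hp⟩ := hmeet i
    obtain ⟨hqρ, hqε⟩ := lt_min_iff.1 (mem_ball.1 hqc)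
    have hpc : dist p c < ρ := by
      linarith [dist_triangle p q c, (lt_min_iff.1 (hsmall p (subset_closure hp) q hi)).1]
    obtain ⟨E, hEW, hEc, hcE, hpE, hE⟩ := hρW p hpc (subset_closure hp₀)
    have hWc : closure (W i) ⊆ closedBall c ε := fun z hz ↦ mem_closedBall.2 <| by
      linarith [dist_triangle z q c, (lt_min_iff.1 (hsmall z hz q hi)).2]
    exact ⟨E ∪ closure (W i), union_subset hEW (hsub i), union_subset hEc hWc, Or.inl hcE,
      Or.inr hi, hE.union p hpE (subset_closure hp) (hpre i).closure⟩
  · exact hq i hsmall hi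

end SmallSets

theorem filled_union_of_jordan_domains_is_jordan_general {ι : Type*} (W : ι → Set ℂ) (i₀ : ι)
    (hJD : ∀ i, IsJordanDomain (W i)) (hdiam : Tendsto (fun i ↦ diam (W i)) cofinite (𝓝 0))
    (hmeet : ∀ i, (W i₀ ∩ W i).Nonempty) :
    IsJordanCurve (frontier (fillHoles (closure (⋃ i, W i)))) := by
  have hopen : ∀ i, IsOpen (W i) := fun i ↦ (hJD i).1
  have hpre : ∀ i, IsPreconnected (W i) := fun i ↦ (hJD i).2.1.isPreconnected
  have hb : ∀ i, IsBounded (W i) := fun i ↦ (hJD i).2.2.1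
  have hcompact : IsCompact (closure (⋃ i, W i)) :=
    (isBounded_iUnion_of_tendsto_diam hb hdiam hmeet).isCompact_closure
  have hUpre : IsPreconnected (⋃ i, W i) := .iUnion_of_reflTransGen hpre fun i j ↦
    .tail (.single (inter_comm (W i₀) _ ▸ hmeet i)) (hmeet j)
  have hUint : ⋃ i, W i ⊆ interior (closure (⋃ i, W i)) :=
    interior_maximal subset_closure (isOpen_iUnion hopen)
  refine isJordanCurve_frontier_fillHoles hcompact hUpre.closure
    (((hJD i₀).2.1.nonempty.mono (subset_iUnion W i₀)).mono hUint)
    (.closure_iUnion hb hdiam hmeet hpre hcompact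
      fun i ↦ (hJD i).2.2.2.isUniformlyLocallyConnected.closure_of_frontier) fun x hx ↦ ?_
  have hxU : x ∉ ⋃ i, W i := fun h ↦ hx.2 (interior_mono fillHoles.subset_self (hUint h))
  exact hUpre.subset_closure (subset_sdiff_singleton subset_closure hxU) sdiff_subset

theorem filled_union_of_jordan_domains_is_jordan
    (W : ℕ → Set ℂ) (hJD : ∀ i, IsJordanDomain (W i))
    (hdiam : Filter.Tendsto (fun i => Metric.diam (W i)) Filter.atTop (nhds 0))
    (hmeet : ∀ i, 1 ≤ i → (W 0 ∩ W i).Nonempty)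
    (hdisj : ∀ i j, 1 ≤ j → j < i → closure (W i) ∩ closure (W j) = ∅) :
    IsJordanCurve (frontier (fillHoles (closure (⋃ i, W i)))) := by
  refine filled_union_of_jordan_domains_is_jordan_general W 0 hJD (Nat.cofinite_eq_atTop ▸ hdiam) ?_
  exact fun i ↦ i.eq_zero_or_pos.elim (fun h ↦ by simpa [h] using (hJD 0).2.1.nonempty) (hmeet i)
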